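/- Let K be a field with at least 13 elements and let S be a smooth cubic surface in P^3 over K. Suppose S contains a pair of skew lines both defined over K, and let P be a K-rational point on either of these two lines that is not an Eckardt point. Then Span({P}) = S(K), i.e. every K-rational point of S is obtained from P by successive secant and tangent constructions. -/

import Mathlib

/- Common framework: points, lines, intersection divisors, the secant-tangent span,
the groups `H_S(K)`, geometric notions over the algebraic closure, and topologies. -/

open MvPolynomial

noncomputable section

namespace CubicSurf

variable {K L : Type*} [Field K] [Field L] {n : ℕ}

/-- The set of `K`-rational points of the projective hypersurface `F = 0`. -/
def zeroSet (F : MvPolynomial (Fin n) K) : Set (Projectivization K (Fin n → K)) :=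
  {P | eval P.rep F = 0}

/-- The binary form obtained by restricting `F` to the line spanned by `u` and `v`,
via the parametrization `(s : t) ↦ s • u + t • v`. -/
def lineRestrict (F : MvPolynomial (Fin n) K) (u v : Fin n → K) : MvPolynomial (Fin 2) K :=
  aeval (fun i => C (u i) * X 0 + C (v i) * X 1) F

/-- A projective line: a 2-dimensional linear subspace of `K^n`. -/
def IsLine (W : Submodule K (Fin n → K)) : Prop := Module.finrank K W = 2

/-- The line `W` lies (geometrically) on the hypersurface `F = 0`. -/
def LineOnSurf (F : MvPolynomial (Fin n) K) (W : Submodule K (Fin n → K)) : Prop :=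
  ∀ u v : Fin n → K, u ∈ W → v ∈ W → lineRestrict F u v = 0

/-- The projective point `P` lies on the line `W`. -/
def OnLine (W : Submodule K (Fin n → K)) (P : Projectivization K (Fin n → K)) : Prop :=
  P.rep ∈ W

/-- The set of `K`-points of the line `W`. -/
def linePts (W : Submodule K (Fin n → K)) : Set (Projectivization K (Fin n → K)) :=
  {P | OnLine W P}

/-- `ℓ · S = P + Q + R`: the intersection divisor (with multiplicities) of the line `W`
with the hypersurface `F = 0` is `P + Q + R`. -/
def MeetsIn (F : MvPolynomial (Fin n) K) (W : Submodule K (Fin n → K))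
    (P Q R : Projectivization K (Fin n → K)) : Prop :=
  ∃ (u v : Fin n → K) (_ : u ∈ W) (_ : v ∈ W) (_ : LinearIndependent K ![u, v])
    (c : K) (l m : Fin 3 → K) (h : ∀ k, l k • u + m k • v ≠ 0),
      c ≠ 0 ∧
      lineRestrict F u v = C c * ∏ k : Fin 3, (C (m k) * X 0 - C (l k) * X 1) ∧
      Projectivization.mk K _ (h 0) = P ∧
      Projectivization.mk K _ (h 1) = Q ∧
      Projectivization.mk K _ (h 2) = R

/-- Membership in the span of a set of points under the secant/tangent process:
the smallest subset of `S(K)` containing `B` such that whenever `P`, `Q` are in it and a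
`K`-line `ℓ ⊄ S` satisfies `ℓ·S = P+Q+R` with `R ∈ S(K)`, then `R` is in it. -/
inductive SpanMem (F : MvPolynomial (Fin n) K) (B : Set (Projectivization K (Fin n → K))) :
    Projectivization K (Fin n → K) → Prop
  | base (P : Projectivization K (Fin n → K)) (hP : P ∈ B) : SpanMem F B P
  | secant (P Q R : Projectivization K (Fin n → K)) (W : Submodule K (Fin n → K))
      (hW : IsLine W) (hWS : ¬ LineOnSurf F W) (hP : SpanMem F B P) (hQ : SpanMem F B Q)
      (hR : R ∈ zeroSet F) (hm : MeetsIn F W P Q R) : SpanMem F B R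

/-- The span of a set of points under the secant/tangent process. -/
def Span (F : MvPolynomial (Fin n) K) (B : Set (Projectivization K (Fin n → K))) :
    Set (Projectivization K (Fin n → K)) :=
  {P | SpanMem F B P}

/-- Smoothness of the projective hypersurface `F = 0`: over the algebraic closure there is
no nonzero common zero of `F` and all of its partial derivatives. -/
def IsSmoothHypersurf (F : MvPolynomial (Fin n) K) : Prop :=
  ∀ v : Fin n → AlgebraicClosure K,
    eval v (MvPolynomial.map (algebraMap K (AlgebraicClosure K)) F) = 0 →
    (∀ i, eval v (pderiv i (MvPolynomial.map (algebraMap K (AlgebraicClosure K)) F)) = 0) →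
    v = 0

/-- A smooth cubic hypersurface. -/
def SmoothCubic (F : MvPolynomial (Fin n) K) : Prop :=
  F.IsHomogeneous 3 ∧ IsSmoothHypersurf F

/-- The linear form cutting out the tangent plane `Π_P` of `F = 0` at `P`,
evaluated at the representative of a point `Q`; `Q ∈ Π_P` iff this vanishes. -/
def tangentEval (F : MvPolynomial (Fin n) K) (P Q : Projectivization K (Fin n → K)) : K :=
  ∑ i, eval P.rep (pderiv i F) * Q.rep i

/-- The set of `K`-points of the tangent plane `Π_P`. -/
def tangentPlanePts (F : MvPolynomial (Fin n) K) (P : Projectivization K (Fin n → K)) :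
    Set (Projectivization K (Fin n → K)) :=
  {Q | tangentEval F P Q = 0}

/-- The set of `K`-points of `Γ_P = S ∩ Π_P`. -/
def GammaPts (F : MvPolynomial (Fin n) K) (P : Projectivization K (Fin n → K)) :
    Set (Projectivization K (Fin n → K)) :=
  zeroSet F ∩ tangentPlanePts F P

/-! ### Base change along a field embedding -/

/-- Base change of a vector along a field embedding. -/
def clVec (φ : K →+* L) (v : Fin n → K) : Fin n → L := fun i => φ (v i)

lemma clVec_ne_zero (φ : K →+* L) {v : Fin n → K} (hv : v ≠ 0) : clVec φ v ≠ 0 := by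
  intro h
  apply hv
  funext i
  have := congrFun h i
  simpa [clVec] using φ.injective (by simpa [clVec] using this)

/-- Base change of a projective point along a field embedding. -/
def clPt (φ : K →+* L) (P : Projectivization K (Fin n → K)) :
    Projectivization L (Fin n → L) :=
  Projectivization.mk L (clVec φ P.rep) (clVec_ne_zero φ P.rep_nonzero)

lemma eval_smul_of_isHomogeneous {R : Type*} [CommSemiring R] {F : MvPolynomial (Fin n) R}
    {d : ℕ} (hF : F.IsHomogeneous d) (a : R) (w : Fin n → R) :
    eval (a • w) F = a ^ d * eval w F := by
  classical
  rw [eval_eq', eval_eq', Finset.mul_sum]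
  refine Finset.sum_congr rfl fun s hs => ?_
  have hdeg : ∑ i, s i = d := by
    have h1 := hF (MvPolynomial.mem_support_iff.mp hs)
    rw [Finsupp.weight_apply] at h1
    rw [← h1, Finsupp.sum_fintype]
    · simp
    · intro i; simp
  have key : ∀ i : Fin n, (a • w) i ^ s i = a ^ s i * w i ^ s i := by
    intro i; simp [mul_pow]
  rw [Finset.prod_congr rfl (fun i _ => key i), Finset.prod_mul_distrib,
    Finset.prod_pow_eq_pow_sum, hdeg]
  ring

lemma clVec_eval (φ : K →+* L) (F : MvPolynomial (Fin n) K) (v : Fin n → K) :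
    eval (clVec φ v) (MvPolynomial.map φ F) = φ (eval v F) := by
  rw [eval_map]
  have h : φ (eval v F) = φ (eval₂Hom (RingHom.id K) v F) := rfl
  rw [h, map_eval₂Hom]
  rfl

/-- A point given by a vector on which a homogeneous `F` vanishes lies in the zero set. -/
lemma mk_mem_zeroSet {F : MvPolynomial (Fin n) K} {d : ℕ} (hF : F.IsHomogeneous d)
    {v : Fin n → K} (hv : v ≠ 0) (h : eval v F = 0) :
    Projectivization.mk K v hv ∈ zeroSet F := by
  obtain ⟨a, ha⟩ := Projectivization.exists_smul_eq_mk_rep K v hv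
  show eval (Projectivization.mk K v hv).rep F = 0
  have hrep : (Projectivization.mk K v hv).rep = (a : K) • v := by
    rw [← ha, Units.smul_def]
  rw [hrep, eval_smul_of_isHomogeneous hF, h, mul_zero]

lemma clPt_mem_zeroSet (φ : K →+* L) {F : MvPolynomial (Fin n) K} {d : ℕ}
    (hF : F.IsHomogeneous d) {P : Projectivization K (Fin n → K)} (hP : P ∈ zeroSet F) :
    clPt φ P ∈ zeroSet (MvPolynomial.map φ F) := by
  apply mk_mem_zeroSet (hF.map φ)
  rw [clVec_eval, hP, map_zero]

/-- The induced map on points of `S` under base change of the field. -/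
def ptMap (φ : K →+* L) {F : MvPolynomial (Fin n) K} {d : ℕ} (hF : F.IsHomogeneous d)
    (P : zeroSet F) : zeroSet (MvPolynomial.map φ F) :=
  ⟨clPt φ P.1, clPt_mem_zeroSet φ hF P.2⟩

/-- A subspace of `L^n` is defined over `K` (w.r.t. `φ : K →+* L`) if it is spanned by
the base change of a `K`-subspace. -/
def DefinedOver (φ : K →+* L) (W : Submodule L (Fin n → L)) : Prop :=
  ∃ W₀ : Submodule K (Fin n → K), W = Submodule.span L (clVec φ '' (W₀ : Set (Fin n → K)))

/-! ### Asymptotic lines, parabolic points, Eckardt points -/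

/-- The line `W` is asymptotic to `F = 0` at `P`: the intersection multiplicity
`(ℓ · S)_P` is at least 3. -/
def AsymptoticAt (F : MvPolynomial (Fin n) K) (W : Submodule K (Fin n → K))
    (P : Projectivization K (Fin n → K)) : Prop :=
  IsLine W ∧ P.rep ∈ W ∧
    ∃ v ∈ W, LinearIndependent K ![P.rep, v] ∧
      ∃ c : K, lineRestrict F P.rep v = C c * (X 1) ^ 3

/-- The set of asymptotic lines at `P`. -/
def AsymSet (F : MvPolynomial (Fin n) K) (P : Projectivization K (Fin n → K)) :
    Set (Submodule K (Fin n → K)) :=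
  {W | AsymptoticAt F W P}

/-- A point of a hypersurface is parabolic (relative to the given field) if it does
not have exactly two distinct asymptotic lines (i.e. it has one or infinitely many). -/
def ParabolicAt (F : MvPolynomial (Fin n) K) (P : Projectivization K (Fin n → K)) : Prop :=
  ¬ ∃ W₁ W₂ : Submodule K (Fin n → K), W₁ ≠ W₂ ∧ AsymSet F P = {W₁, W₂}

/-- An Eckardt point (relative to the given field): three distinct lines lying on the
surface pass through `P`. -/
def EckardtAt (F : MvPolynomial (Fin n) K) (P : Projectivization K (Fin n → K)) : Prop :=
  ∃ W₁ W₂ W₃ : Submodule K (Fin n → K), W₁ ≠ W₂ ∧ W₁ ≠ W₃ ∧ W₂ ≠ W₃ ∧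
    (∀ W ∈ ({W₁, W₂, W₃} : Set (Submodule K (Fin n → K))),
      IsLine W ∧ LineOnSurf F W ∧ OnLine W P)

section geometric

variable (F : MvPolynomial (Fin n) K)

/-- `F` base changed to the algebraic closure of `K`. -/
def clF : MvPolynomial (Fin n) (AlgebraicClosure K) :=
  MvPolynomial.map (algebraMap K (AlgebraicClosure K)) F

/-- A `K`-point of `S` is parabolic (a geometric notion, checked over `K̄`). -/
def IsParabolic (P : Projectivization K (Fin n → K)) : Prop :=
  ParabolicAt (clF F) (clPt (algebraMap K (AlgebraicClosure K)) P)

/-- A `K`-point of `S` is an Eckardt point (a geometric notion, checked over `K̄`). -/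
def IsEckardt (P : Projectivization K (Fin n → K)) : Prop :=
  EckardtAt (clF F) (clPt (algebraMap K (AlgebraicClosure K)) P)

/-- A `K`-point of `S` is `K`-hyperbolic: it has exactly two asymptotic lines over `K̄`,
and both are defined over `K`. -/
def IsHyperbolic (P : Projectivization K (Fin n → K)) : Prop :=
  ∃ W₁ W₂, W₁ ≠ W₂ ∧
    AsymSet (clF F) (clPt (algebraMap K (AlgebraicClosure K)) P) = {W₁, W₂} ∧
    DefinedOver (algebraMap K (AlgebraicClosure K)) W₁ ∧
    DefinedOver (algebraMap K (AlgebraicClosure K)) W₂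

/-- A `K`-point of `S` is `K`-ternary: at least one of the asymptotic lines of `S`
through `P` is defined over `K`. -/
def IsTernary (P : Projectivization K (Fin n → K)) : Prop :=
  ∃ W ∈ AsymSet (clF F) (clPt (algebraMap K (AlgebraicClosure K)) P),
    DefinedOver (algebraMap K (AlgebraicClosure K)) W

end geometric

/-! ### The group `H_S(K)` -/

variable (F : MvPolynomial (Fin n) K)

/-- `G_S(K)`: the free abelian group on the set `S(K)`. -/
abbrev GS := FreeAbelianGroup (zeroSet F)

/-- The degree homomorphism `G_S(K) → ℤ`, `Σ aᵢ Pᵢ ↦ Σ aᵢ`. -/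
def degHom : GS F →+ ℤ := FreeAbelianGroup.lift fun _ => (1 : ℤ)

/-- `P + Q + R` is a "three point sum": either cut out on `S` with multiplicity by a
`K`-line not contained in `S`, or `P`, `Q`, `R` all lie on a `K`-line contained in `S`. -/
def TripleRel (P Q R : zeroSet F) : Prop :=
  ∃ W : Submodule K (Fin n → K), IsLine W ∧
    ((¬ LineOnSurf F W ∧ MeetsIn F W P.1 Q.1 R.1) ∨
      (LineOnSurf F W ∧ OnLine W P.1 ∧ OnLine W Q.1 ∧ OnLine W R.1))

/-- `G'_S(K)`: the subgroup generated by all three point sums. -/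
def Gp : AddSubgroup (GS F) :=
  AddSubgroup.closure {x | ∃ P Q R : zeroSet F, TripleRel F P Q R ∧
    x = FreeAbelianGroup.of P + FreeAbelianGroup.of Q + FreeAbelianGroup.of R}

/-- `G''_S(K)`: the degree-0 part of `G'_S(K)`. -/
def Gpp : AddSubgroup (GS F) := Gp F ⊓ (degHom F).ker

/-- `H_S(K) = G_S(K)/G''_S(K)`. -/
abbrev HS := GS F ⧸ Gpp F

/-- The class `[P] ∈ H_S(K)` of a point `P ∈ S(K)`. -/
def HClass (P : zeroSet F) : HS F := QuotientAddGroup.mk' (Gpp F) (FreeAbelianGroup.of P)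

/-- The degree homomorphism `H_S(K) → ℤ`. -/
def HdegHom : HS F →+ ℤ :=
  QuotientAddGroup.lift (Gpp F) (degHom F) (fun _ hx => hx.2)

/-- `H⁰_S(K)`: the degree-0 part of `H_S(K)`. -/
def H0 : AddSubgroup (HS F) := (HdegHom F).ker

@[simp] lemma HdegHom_HClass (P : zeroSet F) : HdegHom F (HClass F P) = 1 := by
  simp [HdegHom, HClass, degHom]

/-- The class `[P] - [Q]`, as an element of `H⁰_S(K)`. -/
def H0diff (P Q : zeroSet F) : H0 F :=
  ⟨HClass F P - HClass F Q, by simp [H0, AddMonoidHom.mem_ker, map_sub]⟩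

/-! ### mod-`p` dimensions and torsion -/

/-- `A/pA` for an abelian group `A`. -/
abbrev ModP (p : ℕ) (A : Type*) [AddCommGroup A] : Type _ :=
  A ⧸ (AddMonoidHom.range (nsmulAddMonoidHom p : A →+ A))

instance ModP.instModule (p : ℕ) (A : Type*) [AddCommGroup A] : Module (ZMod p) (ModP p A) :=
  QuotientAddGroup.zmodModule (fun x => ⟨x, rfl⟩)

/-- `dim_{F_p} A/pA`. -/
def dimModP (p : ℕ) (A : Type*) [AddCommGroup A] : Cardinal := Module.rank (ZMod p) (ModP p A)

/-- The `k`-torsion subgroup `A[k]` of an abelian group `A`. -/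
def torsion (k : ℕ) (A : Type*) [AddCommGroup A] : AddSubgroup A :=
  (nsmulAddMonoidHom k : A →+ A).ker

instance torsion.instModule (k : ℕ) (A : Type*) [AddCommGroup A] :
    Module (ZMod k) (torsion k A) :=
  AddCommGroup.zmodModule (fun x => Subtype.ext x.2)

/-- `dim_{F_k} A[k]`: the dimension of the `k`-torsion subgroup (for `k` prime). -/
def dimTorsion (k : ℕ) (A : Type*) [AddCommGroup A] : Cardinal :=
  Module.rank (ZMod k) (torsion k A)

/-! ### Topologies -/

/-- The quotient topology on projective space induced by the topology of `K`. -/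
def projTop (K : Type*) [Field K] [TopologicalSpace K] (n : ℕ) :
    TopologicalSpace (Projectivization K (Fin n → K)) :=
  TopologicalSpace.coinduced
    (fun v : {v : Fin n → K // v ≠ 0} => Projectivization.mk K v.1 v.2) inferInstance

/-- The induced topology on the set of `K`-points of `S`. -/
def surfTop (F : MvPolynomial (Fin n) K) [TopologicalSpace K] :
    TopologicalSpace (zeroSet F) :=
  TopologicalSpace.induced Subtype.val (projTop K n)

/-- `K` (a topological field) is a local field: it is isomorphic, as a topological field,
to `ℝ`, to `ℂ`, or to a finite extension of `ℚ_p` for some prime `p` (with its canonical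
topology, namely the `ℚ_p`-vector space topology). -/
def IsLocalField (K : Type*) [Field K] [TopologicalSpace K] : Prop :=
  (∃ e : K ≃+* ℝ, IsHomeomorph e) ∨ (∃ e : K ≃+* ℂ, IsHomeomorph e) ∨
    (∃ (p : ℕ), p.Prime ∧ ∃ (_ : Fact p.Prime) (f : ℚ_[p] →+* K) (m : ℕ)
      (e : K ≃+ (Fin m → ℚ_[p])),
      (∀ (c : ℚ_[p]) (x : K), e (f c * x) = c • e x) ∧ IsHomeomorph e)

end CubicSurf

/-!
Let `e` and `f` be the two skew lines. As every point of space is a sum of a point of `e` and a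
point of `f`, the cubic form is `∑ yᵢ Aᵢ x + ∑ xᵢ Bᵢ y` for two pencils `A`, `B` of binary quadratic
forms, and smoothness makes both pencils base point free, even over the algebraic closure. The
plane through `e` and a point `y` of `f` meets the surface in `e` and in a conic, which is smooth
unless a binary quintic vanishes at `y`. From one intersection point of `e` with a smooth residual
conic, tangents and secants reach every point of `e` outside that conic; using a second such conic,
a general point of `e` generates `e`. A tangent at a general point of `e` meets `f`, so `f`, or
another line skew to `e`, is generated as well, and through each remaining point of the surface
passes a transversal of the two lines.

It remains to treat a point `P` of `e` whose residual conic is singular. This conic is a pair of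
lines, one of which, `m`, meets `f`. If `P` lies on `m`, then the tangents at `P` in the plane of
the conic reach general points of the other line, which is skew to `f` and can replace `e`, unless
it passes through `P` too; in that case `P` is an Eckardt point. If `P` lies on the other line only,
then these tangents reach points of `m`, from which a smooth conic residual to `m` leads to the
intersection point of `m` and `e`, and the first case applies to that point.

General points exist because the forms to be avoided have total degree at most 12.
-/

namespace CubicSurf

open Cardinal
open scoped Polynomial Pointwise

/-! ### Pencils of binary quadratic forms -/

section QuadraticPencil

variable {K L R S : Type*} [Field K] [Field L] [CommRing R] [CommRing S]

/-- The determinant of two vectors of the plane; it vanishes iff they are proportional. -/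
def cross (x u : R × R) : R := x.1 * u.2 - x.2 * u.1

lemma exists_cross_ne_zero {x : K × K} (hx : x ≠ 0) : ∃ u : K × K, cross x u ≠ 0 := by
  by_contra! h
  refine hx (Prod.ext ?_ ?_)
  · simpa [cross] using h (0, 1)
  · simpa [cross] using h (1, 0)

lemma exists_eq_smul_add_smul {x u : K × K} (h : cross x u ≠ 0) (v : K × K) :
    ∃ s : K × K, v = s.1 • x + s.2 • u := by
  refine ⟨(cross v u / cross x u, cross x v / cross x u), Prod.ext ?_ ?_⟩ <;>
  · simp only [Prod.fst_add, Prod.snd_add, Prod.smul_fst, Prod.smul_snd, smul_eq_mul]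
    field_simp
    simp only [cross]
    ring

/-- The binary quadratic form `a x₁² + b x₁ x₂ + c x₂²`. -/
@[ext]
structure BinaryQuadratic (R : Type*) where
  /-- The coefficient of `x₁²`. -/
  a : R
  /-- The coefficient of `x₁ x₂`. -/
  b : R
  /-- The coefficient of `x₂²`. -/
  c : R

namespace BinaryQuadratic

instance : Zero (BinaryQuadratic R) := ⟨⟨0, 0, 0⟩⟩

/-- The value of a binary quadratic form at a vector. -/
def eval (q : BinaryQuadratic R) (x : R × R) : R :=
  q.a * x.1 ^ 2 + q.b * (x.1 * x.2) + q.c * x.2 ^ 2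

/-- The polar bilinear form `q (x + u) - q x - q u`. -/
def polar (q : BinaryQuadratic R) (x u : R × R) : R :=
  2 * q.a * (x.1 * u.1) + q.b * (x.1 * u.2 + x.2 * u.1) + 2 * q.c * (x.2 * u.2)

/-- Extension of scalars. -/
def map (φ : R →+* S) (q : BinaryQuadratic R) : BinaryQuadratic S := ⟨φ q.a, φ q.b, φ q.c⟩

/-- The form in the coordinates `s ↦ s.1 • x + s.2 • u`. -/
def comp (q : BinaryQuadratic R) (x u : R × R) : BinaryQuadratic R :=
  ⟨q.eval x, q.polar x u, q.eval u⟩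

/-- The half-discriminant of the ternary form `q x + z (d · x) + h z²`. -/
def conicDiscr (q : BinaryQuadratic R) (d : R × R) (h : R) : R :=
  4 * q.a * q.c * h + q.b * (d.1 * d.2) - q.a * d.2 ^ 2 - q.c * d.1 ^ 2 - h * q.b ^ 2

variable (q : BinaryQuadratic R)

lemma eval_map (φ : R →+* S) (x : R × R) : (q.map φ).eval (x.map φ φ) = φ (q.eval x) := by
  simp [eval, map]

lemma map_map {T : Type*} [CommRing T] (φ : R →+* S) (ψ : S →+* T) :
    (q.map φ).map ψ = q.map (ψ.comp φ) := rfl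

lemma eval₂Hom_eval_map_C {σ : Type*} (φ : R →+* S) (g : σ → S)
    (x : MvPolynomial σ R × MvPolynomial σ R) :
    eval₂Hom φ g ((q.map C).eval x) = (q.map φ).eval (x.map (eval₂Hom φ g) (eval₂Hom φ g)) := by
  rw [← eval_map, map_map, eval₂Hom_comp_C]

lemma map_zero (φ : R →+* S) : (0 : BinaryQuadratic R).map φ = 0 :=
  BinaryQuadratic.ext (_root_.map_zero φ) (_root_.map_zero φ) (_root_.map_zero φ)

lemma eval_zero (x : R × R) : (0 : BinaryQuadratic R).eval x = 0 := by
  change 0 * _ + 0 * _ + 0 * _ = (0 : R)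
  ring

lemma eval_smul (k : R) (x : R × R) : q.eval (k • x) = k ^ 2 * q.eval x := by
  simp only [eval, Prod.smul_fst, Prod.smul_snd, smul_eq_mul]
  ring

lemma eval_smul_add_smul (s t : R) (x u : R × R) :
    q.eval (s • x + t • u) = s ^ 2 * q.eval x + s * t * q.polar x u + t ^ 2 * q.eval u := by
  simp only [eval, polar, Prod.smul_fst, Prod.smul_snd, Prod.fst_add, Prod.snd_add, smul_eq_mul]
  ring

lemma eval_comp (x u s : R × R) : (q.comp x u).eval s = q.eval (s.1 • x + s.2 • u) := by
  rw [eval_smul_add_smul]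
  simp only [eval, comp]
  ring

lemma conicDiscr_comp (d : R × R) (h : R) (x u : R × R) :
    (q.comp x u).conicDiscr (d.1 * x.1 + d.2 * x.2, d.1 * u.1 + d.2 * u.2) h =
      cross x u ^ 2 * q.conicDiscr d h := by
  simp only [conicDiscr, comp, eval, polar, cross]
  ring

lemma cross_ne_zero {q : BinaryQuadratic K} {x s : K × K} (hx : x ≠ 0) (hqx : q.eval x = 0)
    (hqs : q.eval s ≠ 0) : cross x s ≠ 0 := by
  intro h
  obtain ⟨u, hu⟩ := exists_cross_ne_zero hx
  obtain ⟨r, rfl⟩ := exists_eq_smul_add_smul hu s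
  have hr : r.2 = 0 := by
    have : cross x (r.1 • x + r.2 • u) = r.2 * cross x u := by simp [cross]; ring
    simpa [this, hu] using h
  exact hqs (by simp [hr, eval_smul, hqx])

lemma exists_eval_eq_zero [IsAlgClosed L] (q : BinaryQuadratic L) : ∃ x ≠ 0, q.eval x = 0 := by
  obtain ha | ha := eq_or_ne q.a 0
  · exact ⟨(1, 0), by simp, by simp [eval, ha]⟩
  · obtain ⟨t, ht⟩ := IsAlgClosed.exists_root
      (Polynomial.C q.a * Polynomial.X ^ 2 + Polynomial.C q.b * Polynomial.X + Polynomial.C q.c)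
      (by rw [Polynomial.degree_quadratic ha]; decide)
    refine ⟨(t, 1), by simp, ?_⟩
    simpa [Polynomial.IsRoot, eval] using ht

lemma exists_eval_ne_zero (hK : 2 < #K) {q : BinaryQuadratic K} (hq : q ≠ 0) :
    ∃ t, q.eval (1, t) ≠ 0 := by
  let p := Polynomial.C q.c * Polynomial.X ^ 2 + Polynomial.C q.b * Polynomial.X +
    Polynomial.C q.a
  have hp : p ≠ 0 := by
    contrapose! hq
    have hcoeff (i : ℕ) : p.coeff i = 0 := by rw [hq, Polynomial.coeff_zero]
    have ha : q.a = 0 := by simpa [p] using hcoeff 0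
    have hb : q.b = 0 := by simpa [p] using hcoeff 1
    have hc : q.c = 0 := by simpa [p] using hcoeff 2
    exact BinaryQuadratic.ext ha hb hc
  obtain ⟨t, ht⟩ := Polynomial.exists_eval_ne_zero_of_natDegree_lt_card p hp
    ((Nat.cast_le.mpr Polynomial.natDegree_quadratic_le).trans_lt hK)
  refine ⟨t, fun h => ht ?_⟩
  rw [← h]
  simp only [p, eval, Polynomial.eval_add, Polynomial.eval_mul, Polynomial.eval_C,
    Polynomial.eval_pow, Polynomial.eval_X]
  ring

lemma exists_eval_ne_zero_and_eval_pow_three_add_ne_zero (hK : 10 ≤ #K) {p q : K[X]}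
    (hp : p ≠ 0) (hp_deg : p.natDegree ≤ 1) (hq_deg : q.natDegree = 2) {k : K} (hk : k ≠ 0)
    (r : BinaryQuadratic K) : ∃ t, p.eval t ≠ 0 ∧ q.eval t ≠ 0 ∧
      k * q.eval t ^ 3 + p.eval t * r.eval (p.eval t, q.eval t) ≠ 0 := by
  have hq : q ≠ 0 := by
    rintro rfl
    simp at hq_deg
  let R : K[X] := (r.map Polynomial.C).eval (p, q)
  let H : K[X] := Polynomial.C k * q ^ 3 + p * R
  have eval_R (t : K) : R.eval t = r.eval (p.eval t, q.eval t) := by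
    simp [R, BinaryQuadratic.eval, BinaryQuadratic.map]
  have natDegree_R : R.natDegree ≤ 4 := by
    simp only [R, BinaryQuadratic.eval, BinaryQuadratic.map]
    compute_degree
    omega
  have natDegree_lead : (Polynomial.C k * q ^ 3).natDegree = 6 := by
    rw [Polynomial.natDegree_C_mul hk, Polynomial.natDegree_pow, hq_deg]
  have natDegree_H : H.natDegree = 6 := by
    rw [← natDegree_lead]
    exact Polynomial.natDegree_add_eq_left_of_natDegree_lt
      (Polynomial.natDegree_mul_le.trans_lt (by omega))
  have hH : H ≠ 0 := by
    intro h
    simp [h] at natDegree_H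
  have natDegree_prod : (p * q * H).natDegree < 10 := by
    rw [Polynomial.natDegree_mul (mul_ne_zero hp hq) hH, Polynomial.natDegree_mul hp hq]
    omega
  obtain ⟨t, ht⟩ := Polynomial.exists_eval_ne_zero_of_natDegree_lt_card (p * q * H)
    (mul_ne_zero (mul_ne_zero hp hq) hH) (lt_of_lt_of_le (by exact_mod_cast natDegree_prod) hK)
  rw [Polynomial.eval_mul, Polynomial.eval_mul] at ht
  refine ⟨t, left_ne_zero_of_mul (left_ne_zero_of_mul ht),
    right_ne_zero_of_mul (left_ne_zero_of_mul ht), ?_⟩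
  simpa [H, eval_R] using right_ne_zero_of_mul ht

lemma isHomogeneous_eval_map_C {σ : Type*} {d : ℕ} {x : MvPolynomial σ R × MvPolynomial σ R}
    (h₁ : x.1.IsHomogeneous d) (h₂ : x.2.IsHomogeneous d) :
    ((q.map C).eval x).IsHomogeneous (d * 2) :=
  (((h₁.pow 2).C_mul q.a).add (mul_two d ▸ (h₁.mul h₂).C_mul q.b)).add ((h₂.pow 2).C_mul q.c)

end BinaryQuadratic

/-- A pencil of binary quadratic forms, given by two generators. -/
structure QuadraticPencil (R : Type*) where
  /-- The first generator. -/
  q₀ : BinaryQuadratic R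
  /-- The second generator. -/
  q₁ : BinaryQuadratic R

namespace QuadraticPencil

/-- Extension of scalars. -/
def map (φ : R →+* S) (A : QuadraticPencil R) : QuadraticPencil S := ⟨A.q₀.map φ, A.q₁.map φ⟩

/-- The pencil in the coordinates `s ↦ s.1 • x + s.2 • u`. -/
def comp (A : QuadraticPencil R) (x u : R × R) : QuadraticPencil R :=
  ⟨A.q₀.comp x u, A.q₁.comp x u⟩

/-- The member `y₁ q₀ + y₂ q₁` of the pencil. -/
def member (A : QuadraticPencil R) (y : R × R) : BinaryQuadratic R :=
  ⟨y.1 * A.q₀.a + y.2 * A.q₁.a, y.1 * A.q₀.b + y.2 * A.q₁.b, y.1 * A.q₀.c + y.2 * A.q₁.c⟩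

/-- The parameter of the member of the pencil which vanishes at `x`. -/
def through (A : QuadraticPencil R) (x : R × R) : R × R := (A.q₁.eval x, -A.q₀.eval x)

/-- The generators of the pencil have no common zero over the ground ring. -/
def BasePointFree (A : QuadraticPencil R) : Prop := ∀ x, A.through x = 0 → x = 0

/-- The generators of the pencil have no common zero over the algebraic closure. -/
def GeomBasePointFree (A : QuadraticPencil K) : Prop :=
  (A.map (algebraMap K (AlgebraicClosure K))).BasePointFree

variable (A : QuadraticPencil R)

lemma map_map {T : Type*} [CommRing T] (φ : R →+* S) (ψ : S →+* T) :
    (A.map φ).map ψ = A.map (ψ.comp φ) := rfl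

lemma eval_member (x y : R × R) :
    (A.member y).eval x = y.1 * A.q₀.eval x + y.2 * A.q₁.eval x := by
  simp only [member, BinaryQuadratic.eval]
  ring

lemma eval_member_through (x : R × R) : (A.member (A.through x)).eval x = 0 := by
  rw [eval_member]
  simp only [through]
  ring

lemma cross_through (x y : R × R) : cross y (A.through x) = -(A.member y).eval x := by
  rw [eval_member, cross, through]
  ring

lemma through_eq_zero_iff {x : R × R} :
    A.through x = 0 ↔ A.q₀.eval x = 0 ∧ A.q₁.eval x = 0 := by
  simp [through, Prod.ext_iff, and_comm]

lemma through_smul (k : R) (x : R × R) : A.through (k • x) = k ^ 2 • A.through x := by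
  simp [through, BinaryQuadratic.eval_smul]

lemma member_map (φ : R →+* S) (y : R × R) :
    (A.map φ).member (y.map φ φ) = (A.member y).map φ := by
  simp [member, map, BinaryQuadratic.map]

lemma through_map (φ : R →+* S) (x : R × R) :
    (A.map φ).through (x.map φ φ) = (A.through x).map φ φ := by
  simp only [through, map, BinaryQuadratic.eval_map, Prod.map_apply, map_neg]

variable {A}

lemma eq_smul_through {A : QuadraticPencil K} {x y : K × K} (hx : A.through x ≠ 0)
    (h : (A.member y).eval x = 0) : ∃ k : K, y = k • A.through x := by
  obtain ⟨u, hu⟩ := exists_cross_ne_zero hx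
  obtain ⟨s, rfl⟩ := exists_eq_smul_add_smul hu y
  have hs : s.2 * cross (A.through x) u = 0 := by
    rw [← h, eval_member]
    simp only [cross, through, Prod.fst_add, Prod.snd_add, Prod.smul_fst, Prod.smul_snd,
      smul_eq_mul]
    ring
  exact ⟨s.1, by simp [(mul_eq_zero.mp hs).resolve_right hu]⟩

lemma through_eq_zero_of_cross_ne_zero {A : QuadraticPencil K} {x y y' : K × K}
    (h : cross y y' ≠ 0) (hy : (A.member y).eval x = 0) (hy' : (A.member y').eval x = 0) :
    A.through x = 0 := by
  rw [eval_member] at hy hy'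
  rw [through_eq_zero_iff]
  constructor <;> refine (mul_eq_zero.mp ?_).resolve_left h <;> rw [cross]
  · linear_combination y'.2 * hy - y.2 * hy'
  · linear_combination y.1 * hy' - y'.1 * hy

lemma BasePointFree.q₁_a_ne_zero {A : QuadraticPencil K} (h : A.BasePointFree)
    (ha : A.q₀.a = 0) : A.q₁.a ≠ 0 := by
  intro ha'
  have := h (1, 0) (by simp [through, BinaryQuadratic.eval, ha, ha'])
  simp at this

lemma GeomBasePointFree.basePointFree {A : QuadraticPencil K} (h : A.GeomBasePointFree) :
    A.BasePointFree := by
  let φ := algebraMap K (AlgebraicClosure K)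
  intro x hx
  have hφ : Function.Injective (Prod.map φ φ) := φ.injective.prodMap φ.injective
  refine hφ ((h _ ?_).trans (by ext <;> simp))
  rw [through_map, hx]
  ext <;> simp

lemma BasePointFree.member_ne_zero_of_isAlgClosed [IsAlgClosed L] {A : QuadraticPencil L}
    (h : A.BasePointFree) {y : L × L} (hy : y ≠ 0) : A.member y ≠ 0 := by
  intro hA
  obtain ⟨w, hw⟩ := exists_cross_ne_zero hy
  obtain ⟨x, hx, hwx⟩ := (A.member w).exists_eval_eq_zero
  refine hx (h x (through_eq_zero_of_cross_ne_zero hw ?_ hwx))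
  rw [hA, BinaryQuadratic.eval_zero]

lemma GeomBasePointFree.member_ne_zero {A : QuadraticPencil K} (h : A.GeomBasePointFree)
    {y : K × K} (hy : y ≠ 0) : A.member y ≠ 0 := by
  let φ := algebraMap K (AlgebraicClosure K)
  have hφ : Function.Injective (Prod.map φ φ) := φ.injective.prodMap φ.injective
  have hφy : y.map φ φ ≠ 0 := fun h0 => hy (hφ (h0.trans (by ext <;> simp)))
  intro h0
  refine h.member_ne_zero_of_isAlgClosed hφy ?_
  rw [member_map, h0, BinaryQuadratic.map_zero]

lemma GeomBasePointFree.q₀_ne_zero {A : QuadraticPencil K} (h : A.GeomBasePointFree) :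
    A.q₀ ≠ 0 := by
  simpa [member] using h.member_ne_zero (y := (1, 0)) (by simp)

-- If `(1, 0)` is one zero of `q₀`, then `(q₀.c, -q₀.b)` is the other one.
lemma GeomBasePointFree.q₁_eval_ne_zero {A : QuadraticPencil K} (h : A.GeomBasePointFree)
    (ha : A.q₀.a = 0) : A.q₁.eval (A.q₀.c, -A.q₀.b) ≠ 0 := by
  intro h₁
  have h₀ : A.q₀.eval (A.q₀.c, -A.q₀.b) = 0 := by
    rw [BinaryQuadratic.eval, ha]
    ring
  have hroot := h.basePointFree _ (A.through_eq_zero_iff.mpr ⟨h₀, h₁⟩)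
  rw [Prod.mk_eq_zero, neg_eq_zero] at hroot
  exact h.q₀_ne_zero (BinaryQuadratic.ext ha hroot.2 hroot.1)

end QuadraticPencil

end QuadraticPencil

/-! ### Cubic forms vanishing on two skew lines -/

section SkewForm

variable {K L R S : Type*} [Field K] [Field L] [CommRing R] [CommRing S]

/-- A form of degree 3 on `R² × R²` vanishing on both summands, that is, the equation of a cubic
surface containing two skew lines: `A` collects the terms quadratic in the first variable and `B`
those quadratic in the second one. -/
structure SkewForm (R : Type*) where
  /-- The terms quadratic in the first variable. -/
  A : QuadraticPencil R
  /-- The terms quadratic in the second variable. -/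
  B : QuadraticPencil R

namespace SkewForm

/-- The value of the cubic form. -/
def eval (c : SkewForm R) (x y : R × R) : R := (c.A.member y).eval x + (c.B.member x).eval y

/-- Exchange of the two variables. -/
def swap (c : SkewForm R) : SkewForm R := ⟨c.B, c.A⟩

/-- Extension of scalars. -/
def map (φ : R →+* S) (c : SkewForm R) : SkewForm S := ⟨c.A.map φ, c.B.map φ⟩

/-- The cubic form in the coordinates `s ↦ s.1 • x + s.2 • u` of the first variable. -/
def changeLeft (c : SkewForm R) (x u : R × R) : SkewForm R :=
  ⟨c.A.comp x u, ⟨c.B.member x, c.B.member u⟩⟩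

/-- The binary quintic in the second variable whose zeros are the points of the second line lying
on the lines of the surface which meet both given lines. -/
def discr (c : SkewForm R) (y : R × R) : R := (c.A.member y).eval (c.B.through y)

variable (c : SkewForm R)

lemma eval_swap (x y : R × R) : c.swap.eval x y = c.eval y x := add_comm _ _

lemma eval_changeLeft (x u s y : R × R) :
    (c.changeLeft x u).eval s y = c.eval (s.1 • x + s.2 • u) y := by
  simp only [eval, changeLeft, QuadraticPencil.eval_member, QuadraticPencil.comp,
    BinaryQuadratic.eval_comp, Prod.fst_add, Prod.snd_add, Prod.smul_fst, Prod.smul_snd,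
    smul_eq_mul]
  ring

lemma map_map {T : Type*} [CommRing T] (φ : R →+* S) (ψ : S →+* T) :
    (c.map φ).map ψ = c.map (ψ.comp φ) := rfl

lemma eval_map (φ : R →+* S) (x y : R × R) :
    (c.map φ).eval (x.map φ φ) (y.map φ φ) = φ (c.eval x y) := by
  simp only [eval, map, QuadraticPencil.member_map, BinaryQuadratic.eval_map, map_add]

lemma eval₂Hom_eval_map_C {σ : Type*} (φ : R →+* S) (g : σ → S)
    (x y : MvPolynomial σ R × MvPolynomial σ R) :
    eval₂Hom φ g ((c.map C).eval x y) = (c.map φ).eval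
      (x.map (eval₂Hom φ g) (eval₂Hom φ g)) (y.map (eval₂Hom φ g) (eval₂Hom φ g)) := by
  rw [← eval_map, map_map, eval₂Hom_comp_C]

lemma discr_map (φ : R →+* S) (y : R × R) : (c.map φ).discr (y.map φ φ) = φ (c.discr y) := by
  simp only [discr, map, QuadraticPencil.member_map, QuadraticPencil.through_map,
    BinaryQuadratic.eval_map]

lemma eval₂Hom_discr_map_C {σ : Type*} (φ : R →+* S) (g : σ → S)
    (y : MvPolynomial σ R × MvPolynomial σ R) :
    eval₂Hom φ g ((c.map C).discr y) = (c.map φ).discr (y.map (eval₂Hom φ g) (eval₂Hom φ g)) := by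
  rw [← discr_map, map_map, eval₂Hom_comp_C]

lemma discr_smul (k : R) (y : R × R) : c.discr (k • y) = k ^ 5 * c.discr y := by
  rw [discr, discr, QuadraticPencil.through_smul, BinaryQuadratic.eval_smul,
    QuadraticPencil.eval_member, QuadraticPencil.eval_member]
  simp only [Prod.smul_fst, Prod.smul_snd, smul_eq_mul]
  ring

lemma discr_eq_neg_conicDiscr (y : R × R) :
    (c.A.member y).conicDiscr (c.B.q₀.eval y, c.B.q₁.eval y) 0 = -c.discr y := by
  simp only [BinaryQuadratic.conicDiscr, discr, BinaryQuadratic.eval, QuadraticPencil.through]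
  ring

section IsAlgClosed

variable [IsAlgClosed L]

lemma eval_eq_eval_of_forall_ne_zero {p : L[X]} (h : ∀ t, p.eval t ≠ 0) (s t : L) :
    p.eval s = p.eval t := by
  have hp : p.degree = 0 := by
    by_contra hdeg
    obtain ⟨r, hr⟩ := IsAlgClosed.exists_root p hdeg
    exact h r hr
  rw [Polynomial.eq_C_of_degree_eq_zero hp, Polynomial.eval_C, Polynomial.eval_C]

lemma eval_through_eq_of_forall_ne_zero {B : QuadraticPencil L} {q : BinaryQuadratic L}
    {x u : L × L} (h : ∀ t : L, q.eval (B.through (x + t • u)) ≠ 0) (s t : L) :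
    q.eval (B.through (x + s • u)) = q.eval (B.through (x + t • u)) := by
  let v : L[X] × L[X] :=
    (Polynomial.C x.1 + Polynomial.X * Polynomial.C u.1,
      Polynomial.C x.2 + Polynomial.X * Polynomial.C u.2)
  have eval_p (r : L) : ((q.map Polynomial.C).eval ((B.map Polynomial.C).through v)).eval r =
      q.eval (B.through (x + r • u)) := by
    simp [v, -Polynomial.X_mul_C, BinaryQuadratic.eval, BinaryQuadratic.map, QuadraticPencil.map,
      QuadraticPencil.through]
  rw [← eval_p, ← eval_p]
  exact eval_eq_eval_of_forall_ne_zero (fun r => (eval_p r).trans_ne (h r)) s t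

-- If `discr` vanished, then `q₀ (B.through y) = -y₂ g y` and `q₁ (B.through y) = y₁ g y` for some
-- `g` without nontrivial zeros, so `g` would be constant as well as homogeneous of degree 3.
lemma exists_discr_ne_zero_of_isAlgClosed {c : SkewForm L} (hA : c.A.BasePointFree)
    (hB : c.B.BasePointFree) : ∃ y, c.discr y ≠ 0 := by
  by_contra! hD
  have hD' (y : L × L) : y.1 * c.A.q₀.eval (c.B.through y) +
      y.2 * c.A.q₁.eval (c.B.through y) = 0 := by
    rw [← QuadraticPencil.eval_member]
    exact hD y
  have hne {y : L × L} (hy : y ≠ 0) :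
      ¬ (c.A.q₀.eval (c.B.through y) = 0 ∧ c.A.q₁.eval (c.B.through y) = 0) :=
    fun h => hy (hB _ (hA _ (c.A.through_eq_zero_iff.mpr h)))
  have h₁ (t : L) : c.A.q₁.eval (c.B.through (1, t)) ≠ 0 := fun h =>
    hne (y := (1, t)) (by simp) ⟨by simpa [h] using hD' (1, t), h⟩
  have h₀ (t : L) : c.A.q₀.eval (c.B.through (t, 1)) ≠ 0 := fun h =>
    hne (y := (t, 1)) (by simp) ⟨h, by simpa [h] using hD' (t, 1)⟩
  have const₁ (t : L) : c.A.q₁.eval (c.B.through (1, t)) = c.A.q₁.eval (c.B.through (1, 1)) := by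
    simpa using eval_through_eq_of_forall_ne_zero (q := c.A.q₁) (B := c.B) (x := (1, 0))
      (u := (0, 1)) (by simpa using h₁) t 1
  have const₀ (t : L) : c.A.q₀.eval (c.B.through (t, 1)) = c.A.q₀.eval (c.B.through (1, 1)) := by
    simpa using eval_through_eq_of_forall_ne_zero (q := c.A.q₀) (B := c.B) (x := (0, 1))
      (u := (1, 0)) (by simpa using h₀) t 1
  obtain ⟨t, ht⟩ : ∃ t : L, t ^ 4 - t ≠ 0 := by
    by_contra! h
    exact FiniteField.X_pow_card_sub_X_ne_zero L (by simp : 1 < 4)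
      (Polynomial.funext (by simpa using h))
  have ht₀ : t ≠ 0 := by rintro rfl; simp at ht
  have hsmul : c.A.q₀.eval (c.B.through (1, t)) = t ^ 4 * c.A.q₀.eval (c.B.through (t⁻¹, 1)) := by
    have h : ((1, t) : L × L) = t • (t⁻¹, 1) := by simp [ht₀]
    rw [h, QuadraticPencil.through_smul, BinaryQuadratic.eval_smul, ← pow_mul]
  have h_one := hD' (1, 1)
  have h_t := hD' (1, t)
  rw [hsmul, const₀, const₁] at h_t
  exact mul_ne_zero ht (h₀ 1) (by linear_combination h_t - t * h_one)

lemma exists_discr_through_ne_zero_of_isAlgClosed {c : SkewForm L} (hA : c.A.BasePointFree)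
    (hB : c.B.BasePointFree) : ∃ x, c.discr (c.A.through x) ≠ 0 := by
  obtain ⟨y, hy⟩ := exists_discr_ne_zero_of_isAlgClosed hA hB
  obtain ⟨x, hx, hyx⟩ := (c.A.member y).exists_eval_eq_zero
  obtain ⟨k, rfl⟩ := QuadraticPencil.eq_smul_through (fun h => hx (hA x h)) hyx
  rw [discr_smul] at hy
  exact ⟨x, right_ne_zero_of_mul hy⟩

end IsAlgClosed

lemma isHomogeneous_eval_map_C {σ : Type*} {d : ℕ} {x y : MvPolynomial σ R × MvPolynomial σ R}
    (hx₁ : x.1.IsHomogeneous d) (hx₂ : x.2.IsHomogeneous d) (hy₁ : y.1.IsHomogeneous d)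
    (hy₂ : y.2.IsHomogeneous d) : ((c.map C).eval x y).IsHomogeneous (3 * d) := by
  rw [eval, QuadraticPencil.eval_member, QuadraticPencil.eval_member,
    show 3 * d = d + d * 2 by ring]
  exact ((hy₁.mul (c.A.q₀.isHomogeneous_eval_map_C hx₁ hx₂)).add
    (hy₂.mul (c.A.q₁.isHomogeneous_eval_map_C hx₁ hx₂))).add
    ((hx₁.mul (c.B.q₀.isHomogeneous_eval_map_C hy₁ hy₂)).add
      (hx₂.mul (c.B.q₁.isHomogeneous_eval_map_C hy₁ hy₂)))

lemma isHomogeneous_discr_map_C {σ : Type*} {d : ℕ} {y : MvPolynomial σ R × MvPolynomial σ R}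
    (h₁ : y.1.IsHomogeneous d) (h₂ : y.2.IsHomogeneous d) :
    ((c.map C).discr y).IsHomogeneous (5 * d) := by
  have hB₁ := c.B.q₀.isHomogeneous_eval_map_C h₁ h₂
  have hB₂ := c.B.q₁.isHomogeneous_eval_map_C h₁ h₂
  rw [discr, QuadraticPencil.eval_member, show 5 * d = d + d * 2 * 2 by ring]
  exact (h₁.mul (c.A.q₀.isHomogeneous_eval_map_C hB₂ hB₁.neg)).add
    (h₂.mul (c.A.q₁.isHomogeneous_eval_map_C hB₂ hB₁.neg))

lemma exists_eval_ne_zero_and_discr_through_ne_zero (hK : 12 ≤ #K) {c : SkewForm K}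
    (hA : c.A.GeomBasePointFree) (hB : c.B.GeomBasePointFree) {q : BinaryQuadratic K}
    (hq : q ≠ 0) : ∃ x, q.eval x ≠ 0 ∧ c.discr (c.A.through x) ≠ 0 := by
  let v : MvPolynomial (Fin 2) K × MvPolynomial (Fin 2) K := (X 0, X 1)
  let D := (c.map C).discr ((c.A.map C).through v)
  have hom_v (p : BinaryQuadratic K) : ((p.map C).eval v).IsHomogeneous 2 :=
    p.isHomogeneous_eval_map_C (d := 1) (isHomogeneous_X K 0) (isHomogeneous_X K 1)
  have hom_D : D.IsHomogeneous 10 :=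
    c.isHomogeneous_discr_map_C (d := 2) (hom_v _) (hom_v _).neg
  have map_v {L : Type _} [Field L] (φ : K →+* L) (g : Fin 2 → L) :
      v.map (eval₂Hom φ g) (eval₂Hom φ g) = (g 0, g 1) := by
    ext <;> simp [v]
  have eval₂_q (g : Fin 2 → K) : eval₂Hom (.id K) g ((q.map C).eval v) = q.eval (g 0, g 1) := by
    rw [q.eval₂Hom_eval_map_C, map_v]
    rfl
  have eval₂_D {L : Type _} [Field L] (φ : K →+* L) (g : Fin 2 → L) :
      eval₂Hom φ g D = (c.map φ).discr ((c.map φ).A.through (g 0, g 1)) := by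
    rw [eval₂Hom_discr_map_C, ← QuadraticPencil.through_map, map_v, QuadraticPencil.map_map,
      eval₂Hom_comp_C]
    rfl
  have hq₀ : (q.map C).eval v ≠ 0 := by
    obtain ⟨t, ht⟩ := BinaryQuadratic.exists_eval_ne_zero (lt_of_lt_of_le (by norm_num) hK) hq
    intro h
    exact ht ((eval₂_q ![1, t]).symm.trans (by rw [h, map_zero]))
  have hD₀ : D ≠ 0 := by
    obtain ⟨x, hx⟩ := exists_discr_through_ne_zero_of_isAlgClosed
      (c := c.map (algebraMap K (AlgebraicClosure K))) hA hB
    intro h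
    exact hx ((eval₂_D _ ![x.1, x.2]).symm.trans (by rw [h, map_zero]))
  by_contra! h
  refine mul_ne_zero hq₀ hD₀
    (((hom_v q).mul hom_D).funext_of_le_card (isHomogeneous_zero ..) (fun g => ?_) hK)
  change eval₂Hom (.id K) g _ = eval₂Hom (.id K) g 0
  rw [map_mul, map_zero, eval₂_q, eval₂_D, mul_eq_zero, or_iff_not_imp_left]
  exact h (g 0, g 1)

end SkewForm
end SkewForm

/-! ### Secants and tangents in coordinates -/

section Span

variable {K : Type*} [Field K] {n d : ℕ} {F : MvPolynomial (Fin n) K}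

lemma eval_lineRestrict (u v : Fin n → K) (r : Fin 2 → K) :
    eval r (lineRestrict F u v) = eval (r 0 • u + r 1 • v) F := by
  rw [lineRestrict, ← coe_aeval_eq_eval, ← coe_aeval_eq_eval, RingHom.coe_coe, RingHom.coe_coe,
    ← AlgHom.comp_apply, comp_aeval]
  congr 2
  funext i
  simp [mul_comm]

lemma isHomogeneous_lineRestrict (hF : F.IsHomogeneous d) (u v : Fin n → K) :
    (lineRestrict F u v).IsHomogeneous d :=
  one_mul d ▸ hF.aeval _ fun i =>
    (isHomogeneous_C_mul_X (u i) 0).add (isHomogeneous_C_mul_X (v i) 1)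

lemma lineRestrict_eq_of_forall_eval_eq (hF : F.IsHomogeneous d) (hd : d ≤ #K) {u v : Fin n → K}
    {G : MvPolynomial (Fin 2) K} (hG : G.IsHomogeneous d)
    (h : ∀ r, eval (r 0 • u + r 1 • v) F = eval r G) : lineRestrict F u v = G :=
  (isHomogeneous_lineRestrict hF u v).funext_of_le_card hG
    (fun r => (eval_lineRestrict u v r).trans (h r)) hd

lemma lineOnSurf_iff (hF : F.IsHomogeneous d) (hd : d ≤ #K) {W : Submodule K (Fin n → K)} :
    LineOnSurf F W ↔ ∀ v ∈ W, eval v F = 0 := by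
  constructor
  · intro h v hv
    simpa [h v 0 hv W.zero_mem] using (eval_lineRestrict (F := F) v 0 ![1, 0]).symm
  · intro h u v hu hv
    refine lineRestrict_eq_of_forall_eval_eq hF hd (isHomogeneous_zero ..) fun r => ?_
    rw [map_zero]
    exact h _ (W.add_mem (W.smul_mem _ hu) (W.smul_mem _ hv))

variable (F) in
/-- The cone over the span of `B`: the nonzero vectors representing a point of `Span F B`. -/
def spanCone (B : Set (Projectivization K (Fin n → K))) : Set (Fin n → K) :=
  {v | ∃ hv : v ≠ 0, Projectivization.mk K v hv ∈ Span F B}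

variable {B : Set (Projectivization K (Fin n → K))}

lemma smul_mem_spanCone_iff {k : K} (hk : k ≠ 0) {v : Fin n → K} :
    k • v ∈ spanCone F B ↔ v ∈ spanCone F B := by
  have hmk (hv : v ≠ 0) :
      Projectivization.mk K (k • v) (smul_ne_zero hk hv) = Projectivization.mk K v hv :=
    (Projectivization.mk_eq_mk_iff' ..).mpr ⟨k, rfl⟩
  constructor
  · rintro ⟨hkv, h⟩
    have hv := right_ne_zero_of_smul hkv
    exact ⟨hv, hmk hv ▸ h⟩
  · rintro ⟨hv, h⟩
    exact ⟨smul_ne_zero hk hv, (hmk hv).symm ▸ h⟩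

lemma rep_mem_spanCone_iff {P : Projectivization K (Fin n → K)} :
    P.rep ∈ spanCone F B ↔ P ∈ Span F B := by
  simp [spanCone, P.rep_nonzero]

lemma span_subset_zeroSet (hB : B ⊆ zeroSet F) : Span F B ⊆ zeroSet F := by
  rintro P (⟨_, hP⟩ | ⟨_, _, _, _, _, _, _, _, hP, _⟩)
  exacts [hB hP, hP]

lemma linearIndependent_pair_of_eval_ne_zero (hF : F.IsHomogeneous d) {p r : Fin n → K}
    (hp₀ : p ≠ 0) (hp : eval p F = 0) {s t : K} (h : eval (s • p + t • r) F ≠ 0) :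
    LinearIndependent K ![p, r] := by
  refine (LinearIndependent.pair_iff' hp₀).mpr fun a ha => h ?_
  rw [← ha, smul_smul, ← add_smul, eval_smul_of_isHomogeneous hF, hp, mul_zero]

lemma mem_spanCone_of_secant (hK : 3 ≤ #K) (hF : F.IsHomogeneous 3) {p r : Fin n → K}
    {α β k : K} (hk : k ≠ 0)
    (heval : ∀ s t : K, eval (s • p + t • r) F = k * (s * t) * (β * s - α * t))
    (hp : p ∈ spanCone F B) (hq : α • p + β • r ∈ spanCone F B) : r ∈ spanCone F B := by
  obtain ⟨hp₀, hp⟩ := hp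
  obtain ⟨hq₀, hq⟩ := hq
  obtain ⟨s, t, hst⟩ : ∃ s t : K, eval (s • p + t • r) F ≠ 0 := by
    have hne : (⟨0, β, -α⟩ : BinaryQuadratic K) ≠ 0 := by
      intro h
      have hβ : β = 0 := congrArg BinaryQuadratic.b h
      have hα : α = 0 := neg_eq_zero.mp (congrArg BinaryQuadratic.c h)
      simp [hα, hβ] at hq₀
    obtain ⟨t, ht⟩ := BinaryQuadratic.exists_eval_ne_zero (lt_of_lt_of_le (by norm_num) hK) hne
    refine ⟨1, t, ?_⟩
    rw [heval]
    convert mul_ne_zero hk ht using 1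
    rw [BinaryQuadratic.eval]
    ring
  have hind : LinearIndependent K ![p, r] :=
    linearIndependent_pair_of_eval_ne_zero hF hp₀ (by simpa using heval 1 0) hst
  have hr₀ : r ≠ 0 := hind.ne_zero 1
  let W := Submodule.span K (Set.range ![p, r])
  have hpW : p ∈ W := Submodule.subset_span ⟨0, rfl⟩
  have hrW : r ∈ W := Submodule.subset_span ⟨1, rfl⟩
  have hWS : ¬ LineOnSurf F W := fun h =>
    hst ((lineOnSurf_iff hF (by exact_mod_cast hK)).mp h _
      (W.add_mem (W.smul_mem s hpW) (W.smul_mem t hrW)))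
  refine ⟨hr₀, .secant _ _ _ W (by simp [IsLine, W, finrank_span_eq_card hind]) hWS hp hq
    (mk_mem_zeroSet hF hr₀ (by simpa using heval 0 1)) ?_⟩
  refine ⟨p, r, hpW, hrW, hind, -k, ![1, α, 0], ![0, β, 1], ?_, neg_ne_zero.mpr hk, ?_, ?_⟩
  · simpa [Fin.forall_fin_succ] using ⟨hp₀, hq₀, hr₀⟩
  · refine lineRestrict_eq_of_forall_eval_eq hF (by exact_mod_cast hK) ?_ fun r => ?_
    · exact (IsHomogeneous.prod _ _ (fun _ => 1) fun i _ =>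
        (isHomogeneous_C_mul_X _ 0).sub (isHomogeneous_C_mul_X _ 1)).C_mul _
    · simp [heval, Fin.prod_univ_three]
      ring
  · simp

lemma mem_spanCone_of_tangent (hK : 3 ≤ #K) (hF : F.IsHomogeneous 3) {p r : Fin n → K}
    {k : K} (hk : k ≠ 0) (heval : ∀ s t : K, eval (s • p + t • r) F = k * (s * t ^ 2))
    (hp : p ∈ spanCone F B) : r ∈ spanCone F B :=
  mem_spanCone_of_secant (α := 1) (β := 0) hK hF (neg_ne_zero.mpr hk)
    (fun s t => by rw [heval]; ring) hp (by simpa using hp)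

end Span

section LinePoint

variable {K V : Type*} [Field K] [AddCommGroup V] [Module K V]

/-- The point with coordinates `x` on the line through the two vectors `e`. -/
def linePoint (e : V × V) (x : K × K) : V := x.1 • e.1 + x.2 • e.2

lemma linePoint_add (e : V × V) (x u : K × K) :
    linePoint e (x + u) = linePoint e x + linePoint e u := by
  simp only [linePoint, Prod.fst_add, Prod.snd_add]
  module

lemma linePoint_smul (e : V × V) (k : K) (x : K × K) :
    linePoint e (k • x) = k • linePoint e x := by
  simp only [linePoint, Prod.smul_fst, Prod.smul_snd, smul_eq_mul]
  module

lemma linePoint_linePoint (e : V × V) (x u s : K × K) :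
    linePoint (linePoint e x, linePoint e u) s = linePoint e (s.1 • x + s.2 • u) := by
  rw [linePoint_add, linePoint_smul, linePoint_smul, linePoint]

end LinePoint

section Conic

variable {K : Type*} [Field K] {n : ℕ} {F : MvPolynomial (Fin n) K}
  {B : Set (Projectivization K (Fin n → K))} {e : (Fin n → K) × (Fin n → K)} {v : Fin n → K}
  {q : BinaryQuadratic K} {d : K × K} {h : K}

lemma ne_zero_of_linePoint_mem_spanCone {x : K × K} (hx : linePoint e x ∈ spanCone F B) :
    x ≠ 0 := by
  rintro rfl
  exact hx.1 (by simp [linePoint])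

-- The tangent lines at `e.1` reach points of the residual conic: `p`, and the point where the
-- line through `p` and `e.2` meets the conic again.
lemma snd_mem_spanCone_of_conic (hK : 3 ≤ #K) (hF : F.IsHomogeneous 3)
    (heval : ∀ (x : K × K) (z : K), eval (linePoint e x + z • v) F =
      z * (q.eval x + z * (d.1 * x.1 + d.2 * x.2) + h * z ^ 2))
    (hdiscr : q.conicDiscr d h ≠ 0) (ha : q.a = 0) (hc : q.c ≠ 0) (he : e.1 ∈ spanCone F B) :
    e.2 ∈ spanCone F B := by
  have hne : (⟨0, q.b, d.1⟩ : BinaryQuadratic K) ≠ 0 := by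
    intro h0
    have hb : q.b = 0 := congrArg BinaryQuadratic.b h0
    have hd : d.1 = 0 := congrArg BinaryQuadratic.c h0
    simp [BinaryQuadratic.conicDiscr, ha, hb, hd] at hdiscr
  obtain ⟨κ, hκ⟩ := BinaryQuadratic.exists_eval_ne_zero (lt_of_lt_of_le (by norm_num) hK) hne
  let w := q.b + d.1 * κ
  let m := q.c + d.2 * κ + h * κ ^ 2
  let ρ := -q.b * m + 2 * q.c * w + d.2 * (κ * w)
  have hκw : κ * w ≠ 0 := by
    convert hκ using 1
    simp only [BinaryQuadratic.eval, w]
    ring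
  have hκ₀ : κ ≠ 0 := left_ne_zero_of_mul hκw
  let p := linePoint e (-m, w) + (κ * w) • v
  have hp : p ∈ spanCone F B := by
    refine mem_spanCone_of_tangent (k := κ * w * w ^ 2) hK hF
      (mul_ne_zero hκw (pow_ne_zero 2 (right_ne_zero_of_mul hκw))) (fun s t => ?_) he
    have : s • e.1 + t • p = linePoint e (s - t * m, t * w) + (t * (κ * w)) • v := by
      simp only [p, linePoint]; module
    rw [this, heval]
    simp only [BinaryQuadratic.eval, ha, w, m]
    ring
  have hp' : -q.c • p + ρ • e.2 ∈ spanCone F B := by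
    refine mem_spanCone_of_tangent (k := -q.c * (κ * w) * (q.conicDiscr d h * κ ^ 2)) hK hF
      (mul_ne_zero (mul_ne_zero (neg_ne_zero.mpr hc) hκw)
        (mul_ne_zero hdiscr (pow_ne_zero 2 hκ₀))) (fun s t => ?_) he
    have : s • e.1 + t • (-q.c • p + ρ • e.2) =
        linePoint e (s + t * (q.c * m), t * (-q.c * w + ρ)) + (t * (-q.c * (κ * w))) • v := by
      simp only [p, linePoint]; module
    rw [this, heval]
    simp only [BinaryQuadratic.eval, BinaryQuadratic.conicDiscr, ha, ρ, w, m]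
    ring
  refine mem_spanCone_of_secant hK hF hκw (fun s t => ?_) hp hp'
  have : s • p + t • e.2 = linePoint e (-m * s, w * s + t) + (κ * w * s) • v := by
    simp only [p, linePoint]; module
  rw [this, heval]
  simp only [BinaryQuadratic.eval, ha, ρ, w, m]
  ring

lemma linePoint_mem_spanCone_of_conic (hK : 3 ≤ #K) (hF : F.IsHomogeneous 3)
    (heval : ∀ (x : K × K) (z : K), eval (linePoint e x + z • v) F =
      z * (q.eval x + z * (d.1 * x.1 + d.2 * x.2) + h * z ^ 2))
    (hdiscr : q.conicDiscr d h ≠ 0) {x s : K × K} (hqx : q.eval x = 0) (hqs : q.eval s ≠ 0)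
    (hx : linePoint e x ∈ spanCone F B) : linePoint e s ∈ spanCone F B := by
  refine snd_mem_spanCone_of_conic (e := (linePoint e x, linePoint e s)) (v := v)
    (q := q.comp x s) (d := (d.1 * x.1 + d.2 * x.2, d.1 * s.1 + d.2 * s.2)) (h := h)
    hK hF (fun r z => ?_) ?_ hqx hqs hx
  · rw [linePoint_linePoint, heval, BinaryQuadratic.eval_comp]
    simp only [Prod.fst_add, Prod.snd_add, Prod.smul_fst, Prod.smul_snd, smul_eq_mul]
    ring
  · rw [BinaryQuadratic.conicDiscr_comp]
    have hx₀ : x ≠ 0 := ne_zero_of_linePoint_mem_spanCone hx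
    exact mul_ne_zero (pow_ne_zero 2 (BinaryQuadratic.cross_ne_zero hx₀ hqx hqs)) hdiscr

end Conic

/-! ### Frames adapted to two skew lines -/

section Frame

variable {K L : Type*} [Field K] [Field L] {n : ℕ} {F : MvPolynomial (Fin n) K}

lemma exists_trilinear_of_isHomogeneous (hF : F.IsHomogeneous 3) :
    ∃ τ : (Fin n → K) →ₗ[K] (Fin n → K) →ₗ[K] (Fin n → K) →ₗ[K] K,
      ∀ v, eval v F = τ v v v := by
  rw [← mem_homogeneousSubmodule, ← homogeneousSubmodule_one_pow,
    homogeneousSubmodule_one_eq_span_X, Submodule.span_pow] at hF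
  induction hF using Submodule.span_induction with
  | mem G hG =>
    obtain ⟨_, ⟨_, ⟨i, rfl⟩, _, ⟨j, rfl⟩, rfl⟩, _, ⟨k, rfl⟩, rfl⟩ :
        G ∈ Set.range X * Set.range X * Set.range X := by rwa [← pow_two, ← pow_succ]
    let coord (i : Fin n) : (Fin n → K) →ₗ[K] K := LinearMap.proj i
    exact ⟨(coord i).smulRight ((coord j).smulRight (coord k)), fun v => by simp [coord, mul_assoc]⟩
  | zero => exact ⟨0, fun v => by simp⟩
  | add G H _ _ hG hH =>
    obtain ⟨τ, hτ⟩ := hG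
    obtain ⟨υ, hυ⟩ := hH
    exact ⟨τ + υ, fun v => by simp [hτ, hυ]⟩
  | smul a G _ hG =>
    obtain ⟨τ, hτ⟩ := hG
    exact ⟨a • τ, fun v => by simp [smul_eval, hτ]⟩

/-- The vector with indeterminate coordinates with respect to `e.1, e.2, f.1, f.2`. -/
def genericPoint (e f : (Fin n → K) × (Fin n → K)) : Fin n → MvPolynomial (Fin 4) K :=
  fun i => C (e.1 i) * X 0 + C (e.2 i) * X 1 + (C (f.1 i) * X 2 + C (f.2 i) * X 3)

lemma eval₂Hom_aeval_genericPoint (φ : K →+* L) (e f : (Fin n → K) × (Fin n → K))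
    (g : Fin 4 → L) : eval₂Hom φ g (aeval (genericPoint e f) F) =
      eval (linePoint (e.map (clVec φ) (clVec φ)) (g 0, g 1) +
        linePoint (f.map (clVec φ) (clVec φ)) (g 2, g 3)) (F.map φ) := by
  rw [map_aeval, algebraMap_eq, eval₂Hom_comp_C, eval_map, coe_eval₂Hom]
  congr 1
  funext i
  simp [genericPoint, linePoint, clVec, mul_comm]

/-- The lines through `e.1, e.2` and through `f.1, f.2` span the ambient space, and the cubic form
`F` is given by `c` in the corresponding coordinates; so these are skew lines on `F = 0`. -/
structure IsSkewFrame (F : MvPolynomial (Fin n) K) (e f : (Fin n → K) × (Fin n → K))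
    (c : SkewForm K) : Prop where
  exists_coords : ∀ v, ∃ x y : K × K, v = linePoint e x + linePoint f y
  eval_eq : ∀ x y : K × K, eval (linePoint e x + linePoint f y) F = c.eval x y

namespace IsSkewFrame

variable {e f : (Fin n → K) × (Fin n → K)} {c : SkewForm K}

lemma swap (h : IsSkewFrame F e f c) : IsSkewFrame F f e c.swap where
  exists_coords v := by
    obtain ⟨x, y, rfl⟩ := h.exists_coords v
    exact ⟨y, x, add_comm _ _⟩
  eval_eq x y := by rw [add_comm, h.eval_eq, SkewForm.eval_swap]

lemma changeLeft (h : IsSkewFrame F e f c) {x u : K × K} (hxu : cross x u ≠ 0) :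
    IsSkewFrame F (linePoint e x, linePoint e u) f (c.changeLeft x u) where
  exists_coords v := by
    obtain ⟨r, y, rfl⟩ := h.exists_coords v
    obtain ⟨s, rfl⟩ := exists_eq_smul_add_smul hxu r
    exact ⟨s, y, by rw [linePoint_linePoint]⟩
  eval_eq s y := by rw [linePoint_linePoint, h.eval_eq, SkewForm.eval_changeLeft]

lemma eval_left (h : IsSkewFrame F e f c) (x : K × K) : eval (linePoint e x) F = 0 := by
  have := h.eval_eq x 0
  simpa [linePoint, SkewForm.eval, QuadraticPencil.member, BinaryQuadratic.eval] using this

-- The coefficients are the values of the polarized trilinear form at the basis vectors.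
lemma exists_of_eval_eq_zero (hF : F.IsHomogeneous 3)
    (hspan : ∀ v, ∃ x y : K × K, v = linePoint e x + linePoint f y)
    (he : ∀ x : K × K, eval (linePoint e x) F = 0) (hf : ∀ y : K × K, eval (linePoint f y) F = 0) :
    ∃ c, IsSkewFrame F e f c := by
  obtain ⟨τ, hτ⟩ := exists_trilinear_of_isHomogeneous hF
  let σ (u v w : Fin n → K) : K := τ u v w + τ v w u + τ w u v
  let polarization (u : (Fin n → K) × (Fin n → K)) (w : Fin n → K) : BinaryQuadratic K :=
    ⟨σ u.1 u.1 w, σ u.1 u.2 w + σ u.2 u.1 w, σ u.2 u.2 w⟩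
  have eval_polarization (u : (Fin n → K) × (Fin n → K)) (w : Fin n → K) (x : K × K) :
      (polarization u w).eval x = σ (linePoint u x) (linePoint u x) w := by
    simp only [BinaryQuadratic.eval, polarization, σ, linePoint, map_add, map_smul,
      LinearMap.add_apply, LinearMap.smul_apply, smul_eq_mul]
    ring
  have σ_linePoint (v : Fin n → K) (u : (Fin n → K) × (Fin n → K)) (x : K × K) :
      σ v v (linePoint u x) = x.1 * σ v v u.1 + x.2 * σ v v u.2 := by
    simp only [σ, linePoint, map_add, map_smul, LinearMap.add_apply, LinearMap.smul_apply,
      smul_eq_mul]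
    ring
  refine ⟨⟨⟨polarization e f.1, polarization e f.2⟩, ⟨polarization f e.1, polarization f e.2⟩⟩,
    hspan, fun x y => ?_⟩
  have hx := (hτ _).symm.trans (he x)
  have hy := (hτ _).symm.trans (hf y)
  simp only [SkewForm.eval, QuadraticPencil.eval_member, eval_polarization, ← σ_linePoint, hτ]
  simp only [σ, map_add, LinearMap.add_apply]
  linear_combination hx + hy

lemma aeval_genericPoint (hK : 3 ≤ #K) (hF : F.IsHomogeneous 3) (h : IsSkewFrame F e f c) :
    aeval (genericPoint e f) F = (c.map C).eval (X 0, X 1) (X 2, X 3) := by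
  have hom_left : (aeval (genericPoint e f) F).IsHomogeneous 3 := one_mul 3 ▸ hF.aeval _ fun i =>
    ((isHomogeneous_C_mul_X _ 0).add (isHomogeneous_C_mul_X _ 1)).add
      ((isHomogeneous_C_mul_X _ 2).add (isHomogeneous_C_mul_X _ 3))
  have hom_right := c.isHomogeneous_eval_map_C (σ := Fin 4) (x := (X 0, X 1)) (y := (X 2, X 3))
    (d := 1) (isHomogeneous_X K 0) (isHomogeneous_X K 1) (isHomogeneous_X K 2)
    (isHomogeneous_X K 3)
  refine hom_left.funext_of_le_card hom_right (fun g => ?_) (by exact_mod_cast hK)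
  change eval₂Hom (.id K) g _ = eval₂Hom (.id K) g _
  rw [eval₂Hom_aeval_genericPoint, SkewForm.eval₂Hom_eval_map_C, map_id]
  have h' := h.eval_eq (g 0, g 1) (g 2, g 3)
  simp only [Prod.map, coe_eval₂Hom, eval₂_X]
  exact h'

lemma map (hK : 3 ≤ #K) (hF : F.IsHomogeneous 3) (h : IsSkewFrame F e f c) (φ : K →+* L) :
    IsSkewFrame (F.map φ) (e.map (clVec φ) (clVec φ)) (f.map (clVec φ) (clVec φ)) (c.map φ) where
  exists_coords v := by
    choose x y hxy using fun i => h.exists_coords (Pi.single i 1)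
    refine ⟨∑ i, v i • (x i).map φ φ, ∑ i, v i • (y i).map φ φ, funext fun j => ?_⟩
    have hj (i : Fin n) := congrArg φ (congrFun (hxy i) j)
    simp only [linePoint, Pi.add_apply, Pi.smul_apply, smul_eq_mul, map_add, map_mul] at hj
    simp only [linePoint, clVec, Prod.map, Prod.fst_sum, Prod.snd_sum, Pi.add_apply,
      Pi.smul_apply, smul_eq_mul, Prod.smul_mk, Finset.sum_mul, ← Finset.sum_add_distrib]
    rw [← Finset.sum_congr rfl fun i _ => show v i * φ ((Pi.single i 1 : Fin n → K) j) = _ by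
      rw [hj]; ring]
    simp [Pi.single_apply, apply_ite φ]
  eval_eq x y := by
    have hG := congrArg (eval₂Hom φ ![x.1, x.2, y.1, y.2]) (h.aeval_genericPoint hK hF)
    rw [eval₂Hom_aeval_genericPoint, SkewForm.eval₂Hom_eval_map_C] at hG
    simpa [Prod.map] using hG

lemma eq_zero_of_linePoint_add_linePoint {F : MvPolynomial (Fin 4) K}
    {e f : (Fin 4 → K) × (Fin 4 → K)} (h : IsSkewFrame F e f c) {x y : K × K}
    (hxy : linePoint e x + linePoint f y = 0) : x = 0 ∧ y = 0 := by
  let T : (K × K) × (K × K) →ₗ[K] (Fin 4 → K) :=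
    { toFun p := linePoint e p.1 + linePoint f p.2
      map_add' p r := by
        simp only [Prod.fst_add, Prod.snd_add, linePoint_add]
        abel
      map_smul' k p := by
        simp only [Prod.smul_fst, Prod.smul_snd, linePoint_smul, smul_add, RingHom.id_apply] }
  have hT : Function.Surjective T := fun v => by
    obtain ⟨x, y, rfl⟩ := h.exists_coords v
    exact ⟨(x, y), rfl⟩
  have hT' : Function.Injective T :=
    (LinearMap.injective_iff_surjective_of_finrank_eq_finrank (by simp)).mpr hT
  exact Prod.mk_eq_zero.mp (hT' (hxy.trans (map_zero T).symm))

end IsSkewFrame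
end Frame

section Derivative

variable {R σ : Type*} [CommRing R] [Fintype σ]

lemma derivative_aeval (g : σ → R[X]) (F : MvPolynomial σ R) :
    (aeval g F).derivative = ∑ i, aeval g (pderiv i F) * (g i).derivative := by
  classical
  induction F using MvPolynomial.induction_on with
  | C a => simp
  | add F G hF hG => simp [hF, hG, add_mul, Finset.sum_add_distrib]
  | mul_X F j hF =>
    have hpderiv (i : σ) : aeval g (pderiv i (F * X j)) =
        aeval g (pderiv i F) * g j + if j = i then aeval g F else 0 := by
      rw [pderiv_mul, pderiv_X, map_add, map_mul, map_mul, aeval_X]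
      congr 1
      obtain rfl | hij := eq_or_ne i j
      · simp
      · simp [hij.symm]
    simp only [hpderiv, add_mul, Finset.sum_add_distrib, ite_mul, zero_mul, Finset.sum_ite_eq,
      Finset.mem_univ, if_true]
    rw [map_mul, aeval_X, Polynomial.derivative_mul, hF, Finset.sum_mul]
    simp only [mul_right_comm]

lemma sum_mul_eval_pderiv_eq_zero {K : Type*} [Field K] [Infinite K] {F : MvPolynomial σ K}
    {v w : σ → K} {p : K[X]} (h : ∀ t, eval (v + t • w) F = t ^ 2 * p.eval t) :
    ∑ i, w i * eval v (pderiv i F) = 0 := by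
  let g (i : σ) : K[X] := Polynomial.C (v i) + Polynomial.C (w i) * Polynomial.X
  have eval_g (G : MvPolynomial σ K) (t : K) : (aeval g G).eval t = eval (v + t • w) G := by
    rw [← Polynomial.coe_evalRingHom, map_aeval, ← eval₂_id, coe_eval₂Hom]
    congr 1
    · ext; simp
    · funext i; simp [g]; ring
  have hgF : aeval g F = Polynomial.X ^ 2 * p := Polynomial.funext fun t => by
    simp [eval_g, h]
  have := congrArg (Polynomial.eval 0) ((derivative_aeval g F).symm.trans (congrArg _ hgF))
  simp only [Polynomial.eval_finsetSum, Polynomial.eval_mul, eval_g, zero_smul, add_zero] at this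
  have hg (i : σ) : (g i).derivative.eval 0 = w i := by simp [g]
  simpa [hg, mul_comm (eval v _)] using this

end Derivative

section Smooth

variable {K : Type*} [Field K] {F : MvPolynomial (Fin 4) K} {e f : (Fin 4 → K) × (Fin 4 → K)}
  {c : SkewForm K}

namespace IsSkewFrame

-- A base point of `c.A` is a point of the line where every first-order deformation is tangent.
lemma basePointFree_left [Infinite K] (h : IsSkewFrame F e f c)
    (hF : ∀ v, eval v F = 0 → (∀ i, eval v (pderiv i F) = 0) → v = 0) : c.A.BasePointFree := by
  intro x hx
  obtain ⟨hx₀, hx₁⟩ := c.A.through_eq_zero_iff.mp hx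
  simp only [BinaryQuadratic.eval] at hx₀ hx₁
  have double_root (s y : K × K) (t : K) :
      eval (linePoint e x + t • (linePoint e s + linePoint f y)) F =
        t ^ 2 * (Polynomial.C ((c.A.member y).polar x s + (c.B.member x).eval y) +
          Polynomial.C (c.eval s y) * Polynomial.X).eval t := by
    rw [smul_add, ← linePoint_smul, ← linePoint_smul, ← add_assoc, ← linePoint_add, h.eval_eq]
    simp only [SkewForm.eval, QuadraticPencil.member, BinaryQuadratic.eval, BinaryQuadratic.polar,
      Prod.fst_add, Prod.snd_add, Prod.smul_fst, Prod.smul_snd, smul_eq_mul, Polynomial.eval_add,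
      Polynomial.eval_mul, Polynomial.eval_C, Polynomial.eval_X]
    linear_combination t * y.1 * hx₀ + t * y.2 * hx₁
  have eval_pderiv (i : Fin 4) : eval (linePoint e x) (pderiv i F) = 0 := by
    classical
    obtain ⟨s, y, hsy⟩ := h.exists_coords (Pi.single i 1)
    have hsum := sum_mul_eval_pderiv_eq_zero (double_root s y)
    rw [← hsy] at hsum
    simpa [Pi.single_apply] using hsum
  refine (h.eq_zero_of_linePoint_add_linePoint (y := 0) ?_).1
  simpa [linePoint] using hF _ (h.eval_left x) eval_pderiv

lemma geomBasePointFree_left (hK : 3 ≤ #K) (hF : SmoothCubic F) (h : IsSkewFrame F e f c) :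
    c.A.GeomBasePointFree := by
  have hL := h.map hK hF.1 (algebraMap K (AlgebraicClosure K))
  exact hL.basePointFree_left hF.2

lemma geomBasePointFree_right (hK : 3 ≤ #K) (hF : SmoothCubic F) (h : IsSkewFrame F e f c) :
    c.B.GeomBasePointFree := by
  simpa only [SkewForm.swap] using h.swap.geomBasePointFree_left hK hF

end IsSkewFrame
end Smooth

/-! ### Generating the line of a point -/

section GeneralPoint

variable {K : Type*} [Field K] {n : ℕ} {F : MvPolynomial (Fin n) K}
  {B : Set (Projectivization K (Fin n → K))} {e f : (Fin n → K) × (Fin n → K)} {c : SkewForm K}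

/-- Every point of the line through `e.1` and `e.2` lies in the span of `B`. -/
def LineInSpan (F : MvPolynomial (Fin n) K) (B : Set (Projectivization K (Fin n → K)))
    (e : (Fin n → K) × (Fin n → K)) : Prop :=
  ∀ x : K × K, x ≠ 0 → linePoint e x ∈ spanCone F B

lemma LineInSpan.changeBasis (h : LineInSpan F B e) {x u : K × K} (hxu : cross x u ≠ 0) :
    LineInSpan F B (linePoint e x, linePoint e u) := by
  intro s hs
  rw [linePoint_linePoint]
  refine h _ fun h0 => hs ?_
  have h₁ : s.1 * cross x u = 0 := by
    have : s.1 * cross x u = cross (s.1 • x + s.2 • u) u := by simp [cross]; ring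
    rw [this, h0]; simp [cross]
  have h₂ : s.2 * cross x u = 0 := by
    have : s.2 * cross x u = cross x (s.1 • x + s.2 • u) := by simp [cross]; ring
    rw [this, h0]; simp [cross]
  exact Prod.ext ((mul_eq_zero.mp h₁).resolve_right hxu) ((mul_eq_zero.mp h₂).resolve_right hxu)

namespace IsSkewFrame

-- The plane through the line `e` and the point `y` of `f` cuts out a residual conic.
lemma linePoint_mem_spanCone_of_discr_ne_zero (hK : 3 ≤ #K) (hF : F.IsHomogeneous 3)
    (h : IsSkewFrame F e f c) {x s y : K × K} (hy : c.discr y ≠ 0)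
    (hyx : (c.A.member y).eval x = 0) (hys : (c.A.member y).eval s ≠ 0)
    (hx : linePoint e x ∈ spanCone F B) : linePoint e s ∈ spanCone F B := by
  refine linePoint_mem_spanCone_of_conic (v := linePoint f y) (q := c.A.member y)
    (d := (c.B.q₀.eval y, c.B.q₁.eval y)) (h := 0) hK hF (fun r z => ?_) ?_ hyx hys hx
  · rw [← linePoint_smul, h.eval_eq]
    simp only [SkewForm.eval, QuadraticPencil.eval_member, BinaryQuadratic.eval_smul,
      Prod.smul_fst, Prod.smul_snd, smul_eq_mul]
    ring
  · rw [SkewForm.discr_eq_neg_conicDiscr]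
    exact neg_ne_zero.mpr hy

end IsSkewFrame
end GeneralPoint

section Surface

variable {K : Type*} [Field K] {F : MvPolynomial (Fin 4) K}
  {B : Set (Projectivization K (Fin 4 → K))} {e f : (Fin 4 → K) × (Fin 4 → K)} {c : SkewForm K}

namespace IsSkewFrame

lemma lineInSpan_of_discr_ne_zero (hK : 12 ≤ #K) (hF : SmoothCubic F) (h : IsSkewFrame F e f c)
    {x : K × K} (hdiscr : c.discr (c.A.through x) ≠ 0) (hx : linePoint e x ∈ spanCone F B) :
    LineInSpan F B e := by
  have hK₃ : 3 ≤ #K := le_trans (by norm_num) hK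
  have hA := h.geomBasePointFree_left hK₃ hF
  set y := c.A.through x
  have hy₀ : y ≠ 0 := mt (hA.basePointFree x) (ne_zero_of_linePoint_mem_spanCone hx)
  obtain ⟨x', hyx', hdiscr'⟩ := SkewForm.exists_eval_ne_zero_and_discr_through_ne_zero hK hA
    (h.geomBasePointFree_right hK₃ hF) (hA.member_ne_zero hy₀)
  have hx' : linePoint e x' ∈ spanCone F B := h.linePoint_mem_spanCone_of_discr_ne_zero hK₃ hF.1
    hdiscr (c.A.eval_member_through x) hyx' hx
  have hcross : cross y (c.A.through x') ≠ 0 := by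
    rw [c.A.cross_through]
    exact neg_ne_zero.mpr hyx'
  intro s hs
  by_cases hys : (c.A.member y).eval s = 0
  · refine h.linePoint_mem_spanCone_of_discr_ne_zero hK₃ hF.1 hdiscr'
      (c.A.eval_member_through x') (fun hys' => hs (hA.basePointFree s ?_)) hx'
    exact QuadraticPencil.through_eq_zero_of_cross_ne_zero hcross hys hys'
  · exact h.linePoint_mem_spanCone_of_discr_ne_zero hK₃ hF.1 hdiscr
      (c.A.eval_member_through x) hys hx

end IsSkewFrame
end Surface

section TransversalConic

variable {R : Type*} [CommRing R]

namespace SkewForm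

/-- For a surface containing the line through `e.1` and `f.1`, the plane through that line and the
point `y.1 • e.2 + y.2 • f.2` cuts out a residual conic; this is its trace on the line. -/
def transversalTrace (c : SkewForm R) (y : R × R) : BinaryQuadratic R :=
  ⟨c.A.q₁.a * y.2, c.A.q₀.b * y.1 + c.B.q₀.b * y.2, c.B.q₁.a * y.1⟩

/-- The linear term of the equation of the conic of `SkewForm.transversalTrace`. -/
def transversalLinear (c : SkewForm R) (y : R × R) : R × R :=
  (c.A.q₁.b * (y.1 * y.2) + c.B.q₀.c * y.2 ^ 2, c.A.q₀.c * y.1 ^ 2 + c.B.q₁.b * (y.1 * y.2))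

lemma exists_conicDiscr_transversalTrace_eq (c : SkewForm R) : ∃ r : BinaryQuadratic R, ∀ y : R × R,
    (c.transversalTrace y).conicDiscr (c.transversalLinear y)
      (c.A.q₁.c * (y.1 ^ 2 * y.2) + c.B.q₁.c * (y.1 * y.2 ^ 2)) =
      y.1 * y.2 * (-c.B.q₁.eval (c.B.q₀.c, -c.B.q₀.b) * y.2 ^ 3 + y.1 * r.eval y) := by
  obtain ⟨⟨⟨a₀, a₁, a₂⟩, ⟨a₃, a₄, a₅⟩⟩, ⟨⟨b₀, b₁, b₂⟩, ⟨b₃, b₄, b₅⟩⟩⟩ := c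
  refine ⟨⟨a₁ * a₄ * a₂ - a₃ * a₂ ^ 2 - a₅ * a₁ ^ 2,
    4 * a₃ * b₃ * a₅ + a₁ * a₄ * b₄ + a₁ * b₂ * a₂ + b₁ * a₄ * a₂ - 2 * a₃ * a₂ * b₄ -
      b₃ * a₄ ^ 2 - 2 * a₅ * a₁ * b₁ - b₅ * a₁ ^ 2,
    4 * a₃ * b₃ * b₅ + a₁ * b₂ * b₄ + b₁ * a₄ * b₄ + b₁ * b₂ * a₂ - a₃ * b₄ ^ 2 -
      2 * b₃ * a₄ * b₂ - a₅ * b₁ ^ 2 - 2 * b₅ * a₁ * b₁⟩, fun y => ?_⟩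
  simp only [BinaryQuadratic.conicDiscr, BinaryQuadratic.eval, transversalTrace, transversalLinear]
  ring

end SkewForm
end TransversalConic

section TritangentPlane

variable {K : Type*} [Field K] {n : ℕ} {F : MvPolynomial (Fin n) K}
  {B : Set (Projectivization K (Fin n → K))} {e f : (Fin n → K) × (Fin n → K)} {c : SkewForm K}

/-- When the line through `e.1` and `f.1` lies on the surface, the plane of `e` and `f.1` meets the
surface in these two lines and in the line through the two vectors given here. -/
def SkewForm.residualLine (c : SkewForm K) (e f : (Fin n → K) × (Fin n → K)) :
    (Fin n → K) × (Fin n → K) :=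
  (c.B.q₁.a • e.1 - c.A.q₀.b • f.1, c.B.q₁.a • e.2 - c.A.q₀.c • f.1)

lemma SkewForm.linePoint_residualLine (c : SkewForm K) (x : K × K) :
    linePoint (c.residualLine e f) x =
      linePoint e (c.B.q₁.a • x) + (-(c.A.q₀.b * x.1 + c.A.q₀.c * x.2)) • f.1 := by
  simp only [residualLine, linePoint, Prod.smul_fst, Prod.smul_snd, smul_eq_mul]
  module

namespace IsSkewFrame

lemma eval_linePoint_add_smul_fst (h : IsSkewFrame F e f c) (ha : c.A.q₀.a = 0)
    (hb : c.B.q₀.a = 0) (x : K × K) (r : K) : eval (linePoint e x + r • f.1) F =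
      x.2 * r * (c.A.q₀.b * x.1 + c.A.q₀.c * x.2 + c.B.q₁.a * r) := by
  have : linePoint e x + r • f.1 = linePoint e x + linePoint f (r, 0) := by simp [linePoint]
  rw [this, h.eval_eq]
  simp only [SkewForm.eval, QuadraticPencil.member, BinaryQuadratic.eval, ha, hb]
  ring

lemma exists_residualLine (hF : F.IsHomogeneous 3) (h : IsSkewFrame F e f c)
    (ha : c.A.q₀.a = 0) (hb : c.B.q₀.a = 0) (hb' : c.B.q₁.a ≠ 0) :
    ∃ c', IsSkewFrame F (c.residualLine e f) f c' := by
  refine exists_of_eval_eq_zero hF (fun v => ?_) (fun x => ?_) h.swap.eval_left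
  · obtain ⟨x, y, rfl⟩ := h.exists_coords v
    let s := c.B.q₁.a⁻¹ • x
    refine ⟨s, y + (c.A.q₀.b * s.1 + c.A.q₀.c * s.2, 0), ?_⟩
    rw [c.linePoint_residualLine, smul_inv_smul₀ hb', linePoint_add]
    simp only [linePoint]
    module
  · rw [c.linePoint_residualLine, h.eval_linePoint_add_smul_fst ha hb]
    simp only [Prod.smul_fst, Prod.smul_snd, smul_eq_mul]
    ring

lemma linePoint_residualLine_mem_spanCone (hK : 3 ≤ #K) (hF : F.IsHomogeneous 3)
    (h : IsSkewFrame F e f c) (ha : c.A.q₀.a = 0) (hb : c.B.q₀.a = 0) (hb' : c.B.q₁.a ≠ 0)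
    (ha' : c.A.q₀.b ≠ 0) (he : e.1 ∈ spanCone F B) {x : K × K} (hx : c.A.q₀.eval x ≠ 0) :
    linePoint (c.residualLine e f) x ∈ spanCone F B := by
  refine mem_spanCone_of_tangent (k := -(c.B.q₁.a * c.A.q₀.b * c.A.q₀.eval x)) hK hF
    (neg_ne_zero.mpr (mul_ne_zero (mul_ne_zero hb' ha') hx)) (fun s t => ?_) he
  have : s • e.1 + t • linePoint (c.residualLine e f) x =
      linePoint e (s + t * (c.B.q₁.a * x.1), t * (c.B.q₁.a * x.2)) +
        (-(t * (c.A.q₀.b * x.1 + c.A.q₀.c * x.2))) • f.1 := by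
    rw [c.linePoint_residualLine]
    simp only [linePoint, Prod.smul_fst, Prod.smul_snd, smul_eq_mul]
    module
  rw [this, h.eval_linePoint_add_smul_fst ha hb, BinaryQuadratic.eval, ha]
  ring

-- The residual line meets `e` in the point `e.2` when `c.A.q₀.c = 0`.
lemma fst_add_smul_fst_mem_spanCone (hK : 3 ≤ #K) (hF : F.IsHomogeneous 3)
    (h : IsSkewFrame F e f c) (ha : c.A.q₀.a = 0) (hb : c.B.q₀.a = 0) (ha' : c.A.q₀.c = 0)
    (he : e.2 ∈ spanCone F B) {t : K} (ht : t * (c.A.q₀.b + c.B.q₁.a * t) ≠ 0) :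
    e.1 + t • f.1 ∈ spanCone F B := by
  refine mem_spanCone_of_tangent hK hF ht (fun s u => ?_) he
  have : s • e.2 + u • (e.1 + t • f.1) = linePoint e (u, s) + (u * t) • f.1 := by
    simp only [linePoint]
    module
  rw [this, h.eval_linePoint_add_smul_fst ha hb, ha']
  ring

lemma eval_linePoint_fst_fst_add_smul (h : IsSkewFrame F e f c) (ha : c.A.q₀.a = 0)
    (hb : c.B.q₀.a = 0) (x y : K × K) (z : K) :
    eval (linePoint (e.1, f.1) x + z • linePoint (e.2, f.2) y) F =
      z * ((c.transversalTrace y).eval x +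
        z * ((c.transversalLinear y).1 * x.1 + (c.transversalLinear y).2 * x.2) +
        (c.A.q₁.c * (y.1 ^ 2 * y.2) + c.B.q₁.c * (y.1 * y.2 ^ 2)) * z ^ 2) := by
  have : linePoint (e.1, f.1) x + z • linePoint (e.2, f.2) y =
      linePoint e (x.1, z * y.1) + linePoint f (x.2, z * y.2) := by
    simp only [linePoint]
    module
  rw [this, h.eval_eq]
  simp only [SkewForm.eval, SkewForm.transversalTrace, SkewForm.transversalLinear,
    QuadraticPencil.member, BinaryQuadratic.eval, ha, hb]
  ring

-- We use a smooth conic residual to the line `(e.1, f.1)` which passes through `e.1 + t • f.1` for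
-- some `t` as in `hmem`, but not through `e.1`.
lemma fst_mem_spanCone_of_forall_fst_add_smul_fst (hK : 10 ≤ #K) (hF : F.IsHomogeneous 3)
    (h : IsSkewFrame F e f c) (ha : c.A.q₀.a = 0) (hb : c.B.q₀.a = 0) (ha' : c.A.q₁.a ≠ 0)
    (hb' : c.B.q₁.a ≠ 0) (hB : c.B.q₁.eval (c.B.q₀.c, -c.B.q₀.b) ≠ 0)
    (hmem : ∀ t : K, t * (c.A.q₀.b + c.B.q₁.a * t) ≠ 0 → e.1 + t • f.1 ∈ spanCone F B) :
    e.1 ∈ spanCone F B := by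
  let p : K[X] := Polynomial.C c.B.q₀.b * Polynomial.X + Polynomial.C c.A.q₁.a
  let q : K[X] := Polynomial.C (-c.B.q₁.a) * Polynomial.X ^ 2 +
    Polynomial.C (-c.A.q₀.b) * Polynomial.X + Polynomial.C 0
  have hp : p ≠ 0 := fun hp => ha' (by simpa [p] using congrArg (Polynomial.eval 0) hp)
  obtain ⟨r, hr⟩ := c.exists_conicDiscr_transversalTrace_eq
  obtain ⟨t, hα, hβ, hdiscr⟩ :=
    BinaryQuadratic.exists_eval_ne_zero_and_eval_pow_three_add_ne_zero hK hp
      Polynomial.natDegree_linear_le (Polynomial.natDegree_quadratic (neg_ne_zero.mpr hb'))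
      (neg_ne_zero.mpr hB) r
  have eval_p : p.eval t = c.A.q₁.a + c.B.q₀.b * t := by simp [p]; ring
  have eval_q : q.eval t = -(t * (c.A.q₀.b + c.B.q₁.a * t)) := by simp [q]; ring
  have hK₃ : 3 ≤ #K := le_trans (by norm_num) hK
  have he : linePoint (e.1, f.1) ((1, 0) : K × K) ∈ spanCone F B := by
    refine linePoint_mem_spanCone_of_conic (x := (1, t)) hK₃ hF
      (fun x z => h.eval_linePoint_fst_fst_add_smul ha hb x (p.eval t, q.eval t) z) ?_ ?_ ?_ ?_
    · rw [hr]
      exact mul_ne_zero (mul_ne_zero hα hβ) hdiscr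
    · simp only [BinaryQuadratic.eval, SkewForm.transversalTrace, eval_p, eval_q]
      ring
    · convert mul_ne_zero ha' hβ using 1
      simp only [BinaryQuadratic.eval, SkewForm.transversalTrace]
      ring
    · simpa [linePoint] using hmem t (neg_ne_zero.mp (eval_q ▸ hβ))
  simpa [linePoint] using he

end IsSkewFrame
end TritangentPlane

/-! ### Generating the surface -/

section Generation

variable {K : Type*} [Field K] {F : MvPolynomial (Fin 4) K}
  {B : Set (Projectivization K (Fin 4 → K))} {e f : (Fin 4 → K) × (Fin 4 → K)} {c : SkewForm K}

namespace IsSkewFrame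

lemma lineInSpan_residualLine (hK : 12 ≤ #K) (hF : SmoothCubic F) (h : IsSkewFrame F e f c)
    (ha : c.A.q₀.a = 0) (hb : c.B.q₀.a = 0)
    (hmem : ∀ x, c.A.q₀.eval x ≠ 0 → linePoint (c.residualLine e f) x ∈ spanCone F B) :
    LineInSpan F B (c.residualLine e f) := by
  have hK₃ : 3 ≤ #K := le_trans (by norm_num) hK
  have hB := (h.geomBasePointFree_right hK₃ hF).basePointFree
  obtain ⟨c', h'⟩ := h.exists_residualLine hF.1 ha hb (hB.q₁_a_ne_zero hb)
  obtain ⟨x, hx, hdiscr⟩ := SkewForm.exists_eval_ne_zero_and_discr_through_ne_zero hK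
    (h'.geomBasePointFree_left hK₃ hF) (h'.geomBasePointFree_right hK₃ hF)
    (h.geomBasePointFree_left hK₃ hF).q₀_ne_zero
  exact h'.lineInSpan_of_discr_ne_zero hK hF hdiscr (hmem x hx)

lemma exists_lineInSpan_of_transversal (hK : 12 ≤ #K) (hF : SmoothCubic F)
    (h : IsSkewFrame F e f c) (ha : c.A.q₀.a = 0) (hb : c.B.q₀.a = 0) (ha' : c.A.q₀.b ≠ 0)
    (he : e.1 ∈ spanCone F B) : ∃ e' c', IsSkewFrame F e' f c' ∧ LineInSpan F B e' := by
  have hK₃ : 3 ≤ #K := le_trans (by norm_num) hK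
  have hb' := (h.geomBasePointFree_right hK₃ hF).basePointFree.q₁_a_ne_zero hb
  obtain ⟨c', h'⟩ := h.exists_residualLine hF.1 ha hb hb'
  exact ⟨_, c', h', h.lineInSpan_residualLine hK hF ha hb fun x hx =>
    h.linePoint_residualLine_mem_spanCone hK₃ hF.1 ha hb hb' ha' he hx⟩

-- The three cases are those of the quintic at `(1, 0)`: nonzero, zero because the line through
-- `e.1` and `f.1` lies on the surface, or zero because another line through `f.1` does.
lemma exists_lineInSpan (hK : 12 ≤ #K) (hF : SmoothCubic F) (h : IsSkewFrame F e f c)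
    (ha : c.A.q₀.a = 0) (hne : ¬ (c.B.q₀.a = 0 ∧ c.A.q₀.b = 0)) (he : e.1 ∈ spanCone F B) :
    ∃ e' c', IsSkewFrame F e' f c' ∧ LineInSpan F B e' := by
  have hK₃ : 3 ≤ #K := le_trans (by norm_num) hK
  by_cases hdiscr : c.discr (1, 0) = 0
  · by_cases hb : c.B.q₀.a = 0
    · exact h.exists_lineInSpan_of_transversal hK hF ha hb (fun ha' => hne ⟨hb, ha'⟩) he
    · have hcross : cross (c.B.q₁.a, -c.B.q₀.a) (1, 0) ≠ 0 := by simpa [cross] using hb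
      have h' := h.changeLeft hcross
      set c' := c.changeLeft (c.B.q₁.a, -c.B.q₀.a) (1, 0)
      have ha₀ : c'.A.q₀.a = 0 := by
        simpa [c', SkewForm.changeLeft, QuadraticPencil.comp, BinaryQuadratic.comp, SkewForm.discr,
          QuadraticPencil.member, QuadraticPencil.through, BinaryQuadratic.eval] using hdiscr
      have ha₂ : c'.A.q₀.c = 0 := by
        simp [c', SkewForm.changeLeft, QuadraticPencil.comp, BinaryQuadratic.comp,
          BinaryQuadratic.eval, ha]
      have hb₀ : c'.B.q₀.a = 0 := by
        simp [c', SkewForm.changeLeft, QuadraticPencil.member, mul_comm]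
      have hA := h'.geomBasePointFree_left hK₃ hF
      have hB := h'.geomBasePointFree_right hK₃ hF
      have he₂ : linePoint e ((1, 0) : K × K) ∈ spanCone F B := by simpa [linePoint] using he
      have ha₁ : c'.A.q₀.b ≠ 0 := fun ha₁ => hA.q₀_ne_zero (BinaryQuadratic.ext ha₀ ha₁ ha₂)
      refine h'.exists_lineInSpan_of_transversal hK hF ha₀ hb₀ ha₁ ?_
      exact h'.fst_mem_spanCone_of_forall_fst_add_smul_fst (le_trans (by norm_num) hK) hF.1 ha₀ hb₀
        (hA.basePointFree.q₁_a_ne_zero ha₀) (hB.basePointFree.q₁_a_ne_zero hb₀)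
        (hB.q₁_eval_ne_zero hb₀)
        fun t ht => h'.fst_add_smul_fst_mem_spanCone hK₃ hF.1 ha₀ hb₀ ha₂ he₂ ht
  · refine ⟨e, c, h, h.lineInSpan_of_discr_ne_zero (x := (1, 0)) hK hF ?_
      (by simpa [linePoint] using he)⟩
    have hthrough : c.A.through (1, 0) = c.A.q₁.a • (1, 0) := by
      simp [QuadraticPencil.through, BinaryQuadratic.eval, ha]
    rw [hthrough, SkewForm.discr_smul]
    exact mul_ne_zero (pow_ne_zero 5
      ((h.geomBasePointFree_left hK₃ hF).basePointFree.q₁_a_ne_zero ha)) hdiscr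

lemma lineInSpan_residualLine_of_lineInSpan (hK : 12 ≤ #K) (hF : SmoothCubic F)
    (h : IsSkewFrame F e f c) (ha : c.A.q₀.a = 0) (hb : c.B.q₀.a = 0) (he : LineInSpan F B e)
    (hf : f.1 ∈ spanCone F B) : LineInSpan F B (c.residualLine e f) := by
  refine h.lineInSpan_residualLine hK hF ha hb fun x hx => ?_
  let w := c.A.q₀.b * x.1 + c.A.q₀.c * x.2
  have hxw : x.2 * w ≠ 0 := by
    convert hx using 1
    rw [BinaryQuadratic.eval, ha]
    ring
  have hw : w ≠ 0 := right_ne_zero_of_mul hxw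
  have hx₀ : x ≠ 0 := by
    rintro rfl
    simp at hxw
  refine mem_spanCone_of_secant (p := linePoint e x) (α := -c.B.q₁.a) (β := 1) (k := -(x.2 * w * w))
    (le_trans (by norm_num) hK) hF.1 (neg_ne_zero.mpr (mul_ne_zero hxw hw)) (fun s t => ?_)
    (he x hx₀) ?_
  · have : s • linePoint e x + t • linePoint (c.residualLine e f) x =
        linePoint e ((s + t * c.B.q₁.a) • x) + (-(t * w)) • f.1 := by
      rw [c.linePoint_residualLine, linePoint_smul, linePoint_smul]
      module
    rw [this, h.eval_linePoint_add_smul_fst ha hb]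
    simp only [Prod.smul_fst, Prod.smul_snd, smul_eq_mul, w]
    ring
  · have : -c.B.q₁.a • linePoint e x + (1 : K) • linePoint (c.residualLine e f) x = -w • f.1 := by
      rw [c.linePoint_residualLine, linePoint_smul]
      module
    rw [this, smul_mem_spanCone_iff (neg_ne_zero.mpr hw)]
    exact hf

lemma fst_add_fst_mem_spanCone_of_transversal (hK : 12 ≤ #K) (hF : SmoothCubic F)
    (h : IsSkewFrame F e f c) (ha : c.A.q₀.a = 0) (hb : c.B.q₀.a = 0) (he : LineInSpan F B e)
    (hf : f.1 ∈ spanCone F B) : e.1 + f.1 ∈ spanCone F B := by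
  have hK₃ : 3 ≤ #K := le_trans (by norm_num) hK
  have hb' := (h.geomBasePointFree_right hK₃ hF).basePointFree.q₁_a_ne_zero hb
  have hres := h.lineInSpan_residualLine_of_lineInSpan hK hF ha hb he hf
  by_cases hab : c.A.q₀.b + c.B.q₁.a = 0
  · have : linePoint (c.residualLine e f) ((1, 0) : K × K) = c.B.q₁.a • (e.1 + f.1) := by
      simp [linePoint, SkewForm.residualLine, eq_neg_of_add_eq_zero_left hab]
    rw [← smul_mem_spanCone_iff hb', ← this]
    exact hres _ (by simp)
  · obtain ⟨t, ht⟩ := BinaryQuadratic.exists_eval_ne_zero (lt_of_lt_of_le (by norm_num) hK)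
      (h.geomBasePointFree_left hK₃ hF).q₀_ne_zero
    let w := c.A.q₀.b + c.A.q₀.c * t
    have htw : t * w ≠ 0 := by
      convert ht using 1
      simp only [BinaryQuadratic.eval, ha, w]
      ring
    refine mem_spanCone_of_secant (p := linePoint e (1, t)) (α := -(c.A.q₀.b + c.B.q₁.a)) (β := w)
      hK₃ hF.1 (left_ne_zero_of_mul htw) (fun s u => ?_) (he _ (by simp)) ?_
    · have : s • linePoint e (1, t) + u • (e.1 + f.1) = linePoint e (s + u, s * t) + u • f.1 := by
        simp only [linePoint]
        module
      rw [this, h.eval_linePoint_add_smul_fst ha hb]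
      ring
    · let x := (c.A.q₀.c * t - c.B.q₁.a, -((c.A.q₀.b + c.B.q₁.a) * t))
      have : c.B.q₁.a • (-(c.A.q₀.b + c.B.q₁.a) • linePoint e (1, t) + w • (e.1 + f.1)) =
          linePoint (c.residualLine e f) x := by
        rw [c.linePoint_residualLine]
        simp only [linePoint, x, w, Prod.smul_fst, Prod.smul_snd, smul_eq_mul]
        module
      rw [← smul_mem_spanCone_iff hb', this]
      refine hres x fun hx => mul_ne_zero hab (left_ne_zero_of_mul htw) ?_
      exact neg_eq_zero.mp (congrArg Prod.snd hx)

lemma fst_add_fst_mem_spanCone (hK : 12 ≤ #K) (hF : SmoothCubic F) (h : IsSkewFrame F e f c)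
    (he : LineInSpan F B e) (hf : LineInSpan F B f) (hv : eval (e.1 + f.1) F = 0) :
    e.1 + f.1 ∈ spanCone F B := by
  have he₁ : e.1 ∈ spanCone F B := by simpa [linePoint] using he (1, 0) (by simp)
  have hf₁ : f.1 ∈ spanCone F B := by simpa [linePoint] using hf (1, 0) (by simp)
  have eval_smul_add_smul (s t : K) :
      eval (s • e.1 + t • f.1) F = s * t * (c.A.q₀.a * s + c.B.q₀.a * t) := by
    have : s • e.1 + t • f.1 = linePoint e (s, 0) + linePoint f (t, 0) := by simp [linePoint]
    rw [this, h.eval_eq]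
    simp only [SkewForm.eval, QuadraticPencil.member, BinaryQuadratic.eval]
    ring
  have hab : c.A.q₀.a + c.B.q₀.a = 0 := by
    simpa [hv, eq_comm] using eval_smul_add_smul 1 1
  by_cases ha : c.A.q₀.a = 0
  · exact h.fst_add_fst_mem_spanCone_of_transversal hK hF ha (by simpa [ha] using hab) he hf₁
  · refine mem_spanCone_of_secant (α := -1) (β := 1) (le_trans (by norm_num) hK) hF.1 ha
      (fun s t => ?_) he₁ (by simpa using hf₁)
    rw [show s • e.1 + t • (e.1 + f.1) = (s + t) • e.1 + t • f.1 by module, eval_smul_add_smul]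
    linear_combination (s + t) * t ^ 2 * hab

lemma mem_spanCone_of_lineInSpan_of_lineInSpan (hK : 12 ≤ #K) (hF : SmoothCubic F)
    (h : IsSkewFrame F e f c) (he : LineInSpan F B e) (hf : LineInSpan F B f) {v : Fin 4 → K}
    (hv₀ : v ≠ 0) (hv : eval v F = 0) : v ∈ spanCone F B := by
  obtain ⟨x, y, rfl⟩ := h.exists_coords v
  obtain rfl | hx := eq_or_ne x 0
  · obtain rfl | hy := eq_or_ne y 0
    · simp [linePoint] at hv₀
    · simpa [linePoint] using hf y hy
  · obtain rfl | hy := eq_or_ne y 0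
    · simpa [linePoint] using he x hx
    · obtain ⟨u, hu⟩ := exists_cross_ne_zero hx
      obtain ⟨w, hw⟩ := exists_cross_ne_zero hy
      exact ((h.changeLeft hu).swap.changeLeft hw).swap.fst_add_fst_mem_spanCone hK hF
        (he.changeBasis hu) (hf.changeBasis hw) hv

-- A tangent to the surface at a general point `linePoint e x` of the line `e` meets the line `f`.
lemma exists_linePoint_mem_spanCone (hK : 12 ≤ #K) (hF : SmoothCubic F)
    (h : IsSkewFrame F e f c) (he : LineInSpan F B e) :
    ∃ y, c.discr y ≠ 0 ∧ linePoint f y ∈ spanCone F B := by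
  have hK₃ : 3 ≤ #K := le_trans (by norm_num) hK
  have hA := h.geomBasePointFree_left hK₃ hF
  have hB := h.geomBasePointFree_right hK₃ hF
  obtain ⟨x, hx, hdiscr⟩ :=
    SkewForm.exists_eval_ne_zero_and_discr_through_ne_zero hK hA hB hA.q₀_ne_zero
  have hx₀ : x ≠ 0 := by
    rintro rfl
    simp [BinaryQuadratic.eval] at hx
  set y := c.A.through x
  have hAyx : (c.A.member y).eval x = 0 := c.A.eval_member_through x
  have hy₀ : y ≠ 0 := mt (hA.basePointFree x) hx₀
  have hBxy : (c.B.member x).eval y ≠ 0 := by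
    intro hBxy
    obtain ⟨k, hk⟩ := QuadraticPencil.eq_smul_through (mt (hB.basePointFree y) hy₀) hBxy
    have hk₀ : k ≠ 0 := by
      rintro rfl
      exact hx₀ (by simpa using hk)
    rw [hk, BinaryQuadratic.eval_smul] at hAyx
    exact hdiscr ((mul_eq_zero.mp hAyx).resolve_left (pow_ne_zero 2 hk₀))
  refine ⟨y, hdiscr, mem_spanCone_of_tangent hK₃ hF.1 hBxy (fun s t => ?_) (he x hx₀)⟩
  rw [← linePoint_smul, ← linePoint_smul, h.eval_eq]
  simp only [SkewForm.eval, QuadraticPencil.eval_member, BinaryQuadratic.eval_smul,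
    Prod.smul_fst, Prod.smul_snd, smul_eq_mul] at hAyx ⊢
  linear_combination t * s ^ 2 * hAyx

lemma mem_spanCone_of_lineInSpan (hK : 12 ≤ #K) (hF : SmoothCubic F) (h : IsSkewFrame F e f c)
    (he : LineInSpan F B e) {v : Fin 4 → K} (hv₀ : v ≠ 0) (hv : eval v F = 0) :
    v ∈ spanCone F B := by
  have hK₃ : 3 ≤ #K := le_trans (by norm_num) hK
  obtain ⟨y, hdiscr, hy⟩ := h.exists_linePoint_mem_spanCone hK hF he
  have hz : c.B.through y ≠ 0 := mt ((h.geomBasePointFree_right hK₃ hF).basePointFree y)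
    (ne_zero_of_linePoint_mem_spanCone hy)
  obtain ⟨u, hu⟩ := exists_cross_ne_zero hz
  obtain ⟨w, hw⟩ := exists_cross_ne_zero (ne_zero_of_linePoint_mem_spanCone hy)
  have h' := ((h.changeLeft hu).swap.changeLeft hw)
  obtain ⟨f', c', h'', hf'⟩ := h'.exists_lineInSpan hK hF
    (c.B.eval_member_through y) (fun h0 => hdiscr ((c.A.eval_member _ y).trans h0.1)) hy
  exact h''.mem_spanCone_of_lineInSpan_of_lineInSpan hK hF hf' (he.changeBasis hu) hv₀ hv

lemma mem_spanCone_of_fst_mem_spanCone (hK : 12 ≤ #K) (hF : SmoothCubic F)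
    (h : IsSkewFrame F e f c) (ha : c.A.q₀.a = 0) (hne : ¬ (c.B.q₀.a = 0 ∧ c.A.q₀.b = 0))
    (he : e.1 ∈ spanCone F B) {v : Fin 4 → K} (hv₀ : v ≠ 0) (hv : eval v F = 0) :
    v ∈ spanCone F B := by
  obtain ⟨e', c', h', he'⟩ := h.exists_lineInSpan hK hF ha hne he
  exact h'.mem_spanCone_of_lineInSpan hK hF he' hv₀ hv

end IsSkewFrame
end Generation

/-! ### Eckardt points -/

section ConcurrentLines

variable {K : Type*} [Field K] {n : ℕ} {p : Fin n → K} {g : (Fin n → K) × (Fin n → K)}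

/-- The line joining `p` to the point with coordinates `w` on the line `g`. -/
def joinLine (p : Fin n → K) (g : (Fin n → K) × (Fin n → K)) (w : K × K) :
    Submodule K (Fin n → K) :=
  .span K {p, linePoint g w}

lemma eq_zero_of_smul_add_linePoint_eq_zero (h : LinearIndependent K ![p, g.1, g.2]) {s : K}
    {w : K × K} (hsw : s • p + linePoint g w = 0) : s = 0 ∧ w = 0 := by
  have := Fintype.linearIndependent_iff.mp h ![s, w.1, w.2]
    (by simpa [Fin.sum_univ_three, linePoint, add_assoc] using hsw)
  simpa [Fin.forall_fin_succ, Prod.ext_iff] using this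

lemma isLine_joinLine (h : LinearIndependent K ![p, g.1, g.2]) {w : K × K} (hw : w ≠ 0) :
    IsLine (joinLine p g w) := by
  have hli : LinearIndependent K ![p, linePoint g w] :=
    LinearIndependent.pair_iff.mpr fun s t hst => by
      rw [← linePoint_smul] at hst
      obtain ⟨hs, ht⟩ := eq_zero_of_smul_add_linePoint_eq_zero h hst
      exact ⟨hs, (smul_eq_zero.mp ht).resolve_right hw⟩
  rw [IsLine, joinLine, ← Matrix.range_cons_cons_empty _ _ ![], finrank_span_eq_card hli,
    Fintype.card_fin]

lemma joinLine_ne_joinLine (h : LinearIndependent K ![p, g.1, g.2]) {w w' : K × K}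
    (hw : cross w w' ≠ 0) : joinLine p g w ≠ joinLine p g w' := by
  intro heq
  obtain ⟨s, t, hst⟩ := Submodule.mem_span_pair.mp
    (heq ▸ Submodule.subset_span (by simp) : linePoint g w ∈ joinLine p g w')
  have hsw : s • p + linePoint g (t • w' + (-1 : K) • w) = 0 := by
    rw [linePoint_add, linePoint_smul, linePoint_smul, ← hst]
    module
  have hw' := (eq_zero_of_smul_add_linePoint_eq_zero h hsw).2
  have h₁ : t * w'.1 - w.1 = 0 := by simpa [sub_eq_add_neg] using congrArg Prod.fst hw'
  have h₂ : t * w'.2 - w.2 = 0 := by simpa [sub_eq_add_neg] using congrArg Prod.snd hw'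
  refine hw ?_
  rw [cross]
  linear_combination w'.1 * h₂ - w'.2 * h₁

lemma onLine_joinLine (hp : p ≠ 0) (w : K × K) :
    OnLine (joinLine p g w) (Projectivization.mk K p hp) := by
  obtain ⟨k, hk⟩ := Projectivization.exists_smul_eq_mk_rep K p hp
  rw [OnLine, ← hk, Units.smul_def]
  exact Submodule.smul_mem _ _ (Submodule.subset_span (by simp))

end ConcurrentLines

section SkewLines

variable {K : Type*} [Field K] {F : MvPolynomial (Fin 4) K}
  {e f : (Fin 4 → K) × (Fin 4 → K)} {c : SkewForm K}

namespace IsSkewFrame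

lemma linearIndependent_fst_snd_fst (h : IsSkewFrame F e f c) :
    LinearIndependent K ![e.1, e.2, f.1] := by
  refine Fintype.linearIndependent_iff.mpr fun r hr => ?_
  have : linePoint e (r 0, r 1) + linePoint f (r 2, 0) = 0 := by
    simpa [Fin.sum_univ_three, linePoint] using hr
  simpa [Fin.forall_fin_succ, and_assoc] using h.eq_zero_of_linePoint_add_linePoint this

lemma lineOnSurf_joinLine (hK : 3 ≤ #K) (hF : F.IsHomogeneous 3) (h : IsSkewFrame F e f c)
    (ha : c.A.q₀.a = 0) (hb : c.B.q₀.a = 0) (ha' : c.A.q₀.b = 0) {w : K × K}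
    (hw : w.1 * w.2 * (c.A.q₀.c * w.1 + c.B.q₁.a * w.2) = 0) :
    LineOnSurf F (joinLine e.1 (e.2, f.1) w) := by
  refine (lineOnSurf_iff hF (by exact_mod_cast hK)).mpr fun v hv => ?_
  obtain ⟨s, t, rfl⟩ := Submodule.mem_span_pair.mp hv
  have : s • e.1 + t • linePoint (e.2, f.1) w = linePoint e (s, t * w.1) + (t * w.2) • f.1 := by
    simp only [linePoint]
    module
  rw [this, h.eval_linePoint_add_smul_fst ha hb, ha']
  linear_combination t ^ 3 * hw

-- The plane of `e` and `f.1` meets the surface in three lines, all of them passing through `e.1`.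
lemma eckardtAt (hK : 3 ≤ #K) (hF : F.IsHomogeneous 3) (h : IsSkewFrame F e f c)
    (ha : c.A.q₀.a = 0) (hb : c.B.q₀.a = 0) (ha' : c.A.q₀.b = 0) (hc : c.A.q₀.c ≠ 0)
    (hb' : c.B.q₁.a ≠ 0) (he : e.1 ≠ 0) : EckardtAt F (Projectivization.mk K e.1 he) := by
  let line := joinLine e.1 (e.2, f.1)
  have line_ne {w w' : K × K} (hw : cross w w' ≠ 0) : line w ≠ line w' :=
    joinLine_ne_joinLine (g := (e.2, f.1)) h.linearIndependent_fst_snd_fst hw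
  have line_mem {w : K × K} (hw₀ : w ≠ 0)
      (hw : w.1 * w.2 * (c.A.q₀.c * w.1 + c.B.q₁.a * w.2) = 0) :
      IsLine (line w) ∧ LineOnSurf F (line w) ∧ OnLine (line w) (.mk K e.1 he) :=
    ⟨isLine_joinLine (g := (e.2, f.1)) h.linearIndependent_fst_snd_fst hw₀,
      h.lineOnSurf_joinLine hK hF ha hb ha' hw, onLine_joinLine he w⟩
  refine ⟨line (1, 0), line (0, 1), line (c.B.q₁.a, -c.A.q₀.c), line_ne (by simp [cross]),
    line_ne (by simpa [cross]), line_ne (by simpa [cross]), ?_⟩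
  rintro _ (rfl | rfl | rfl)
  exacts [line_mem (by simp) (by simp), line_mem (by simp) (by simp),
    line_mem (by simp [hb']) (by ring)]

lemma isEckardt (hK : 3 ≤ #K) (hF : SmoothCubic F) {P : Projectivization K (Fin 4 → K)}
    {u : Fin 4 → K} (h : IsSkewFrame F (P.rep, u) f c) (ha : c.A.q₀.a = 0) (hb : c.B.q₀.a = 0)
    (ha' : c.A.q₀.b = 0) : IsEckardt F P := by
  have hc : c.A.q₀.c ≠ 0 := fun hc =>
    (h.geomBasePointFree_left hK hF).q₀_ne_zero (BinaryQuadratic.ext ha ha' hc)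
  have hb' := (h.geomBasePointFree_right hK hF).basePointFree.q₁_a_ne_zero hb
  have h' := h.map hK hF.1 (algebraMap K (AlgebraicClosure K))
  refine h'.eckardtAt (ofNat_lt_aleph0.le.trans (aleph0_le_mk _)) (hF.1.map _) ?_ ?_ ?_ ?_ ?_
    (clVec_ne_zero _ P.rep_nonzero) <;>
  simpa [SkewForm.map, QuadraticPencil.map, BinaryQuadratic.map]

end IsSkewFrame

lemma exists_isSkewFrame {W₁ W₂ : Submodule K (Fin 4 → K)} (hF : F.IsHomogeneous 3)
    (hl₁ : IsLine W₁) (hl₂ : IsLine W₂) (hS₁ : ∀ v ∈ W₁, eval v F = 0)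
    (hS₂ : ∀ v ∈ W₂, eval v F = 0) (hskew : W₁ ⊓ W₂ = ⊥) :
    ∃ e f c, IsSkewFrame F e f c ∧ ∀ v ∈ W₁, ∃ x : K × K, v = linePoint e x := by
  have exists_pair {W : Submodule K (Fin 4 → K)} (hW : IsLine W) :
      ∃ e, (∀ v ∈ W, ∃ x : K × K, v = linePoint e x) ∧ ∀ x : K × K, linePoint e x ∈ W := by
    let b := Module.finBasisOfFinrankEq K W hW
    refine ⟨(b 0, b 1), fun v hv => ?_, fun x =>
      W.add_mem (W.smul_mem _ (b 0).2) (W.smul_mem _ (b 1).2)⟩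
    have hsum := congrArg Subtype.val (b.sum_repr ⟨v, hv⟩)
    rw [Fin.sum_univ_two] at hsum
    exact ⟨(_, _), hsum.symm⟩
  have htop : W₁ ⊔ W₂ = ⊤ := by
    have hrank := Submodule.finrank_sup_add_finrank_inf_eq W₁ W₂
    rw [hskew, finrank_bot, hl₁, hl₂] at hrank
    exact Submodule.eq_top_of_finrank_eq (by simpa using hrank)
  obtain ⟨e, he, heW⟩ := exists_pair hl₁
  obtain ⟨f, hf, hfW⟩ := exists_pair hl₂
  obtain ⟨c, h⟩ := IsSkewFrame.exists_of_eval_eq_zero (e := e) (f := f) hF (fun v => by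
    obtain ⟨w, hw, w', hw', rfl⟩ := Submodule.mem_sup.mp (htop ▸ Submodule.mem_top : v ∈ W₁ ⊔ W₂)
    obtain ⟨x, rfl⟩ := he w hw
    obtain ⟨y, rfl⟩ := hf w' hw'
    exact ⟨x, y, rfl⟩) (fun x => hS₁ _ (heW x)) fun y => hS₂ _ (hfW y)
  exact ⟨e, f, c, h, he⟩

-- `f.1` is chosen as the point of the second line on the tangent plane at `P`.
lemma exists_isSkewFrame_rep {W₁ W₂ : Submodule K (Fin 4 → K)} (hK : 3 ≤ #K) (hF : SmoothCubic F)
    (hl₁ : IsLine W₁) (hl₂ : IsLine W₂) (hS₁ : LineOnSurf F W₁) (hS₂ : LineOnSurf F W₂)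
    (hskew : W₁ ⊓ W₂ = ⊥) {P : Projectivization K (Fin 4 → K)} (hP : OnLine W₁ P) :
    ∃ u f c, IsSkewFrame F (P.rep, u) f c ∧ c.A.q₀.a = 0 := by
  have hd : ((3 : ℕ) : Cardinal) ≤ #K := by exact_mod_cast hK
  obtain ⟨e, f, c, h, he⟩ := exists_isSkewFrame hF.1 hl₁ hl₂ ((lineOnSurf_iff hF.1 hd).mp hS₁)
    ((lineOnSurf_iff hF.1 hd).mp hS₂) hskew
  obtain ⟨x, hx⟩ := he P.rep hP
  have hx₀ : x ≠ 0 := by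
    rintro rfl
    exact P.rep_nonzero (by simpa [linePoint] using hx)
  have hy₀ : c.A.through x ≠ 0 := mt ((h.geomBasePointFree_left hK hF).basePointFree x) hx₀
  obtain ⟨u, hu⟩ := exists_cross_ne_zero hx₀
  obtain ⟨w, hw⟩ := exists_cross_ne_zero hy₀
  rw [hx]
  exact ⟨_, _, _, (h.swap.changeLeft hw).swap.changeLeft hu, c.A.eval_member_through x⟩

lemma span_singleton_eq_zeroSet {W₁ W₂ : Submodule K (Fin 4 → K)} (hK : 12 ≤ #K)
    (hF : SmoothCubic F) (hl₁ : IsLine W₁) (hl₂ : IsLine W₂) (hS₁ : LineOnSurf F W₁)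
    (hS₂ : LineOnSurf F W₂) (hskew : W₁ ⊓ W₂ = ⊥) {P : Projectivization K (Fin 4 → K)}
    (hP : OnLine W₁ P) (hPS : P ∈ zeroSet F) (hPE : ¬ IsEckardt F P) :
    Span F {P} = zeroSet F := by
  have hK₃ : 3 ≤ #K := le_trans (by norm_num) hK
  obtain ⟨u, f, c, h, ha⟩ := exists_isSkewFrame_rep hK₃ hF hl₁ hl₂ hS₁ hS₂ hskew hP
  have hne : ¬ (c.B.q₀.a = 0 ∧ c.A.q₀.b = 0) := fun ⟨hb, ha'⟩ => hPE (h.isEckardt hK₃ hF ha hb ha')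
  have hmem : P.rep ∈ spanCone F {P} := rep_mem_spanCone_iff.mpr (.base P rfl)
  refine (span_subset_zeroSet (by simpa using hPS)).antisymm fun Q hQ => ?_
  exact rep_mem_spanCone_iff.mp
    (h.mem_spanCone_of_fst_mem_spanCone hK hF ha hne hmem Q.rep_nonzero hQ)

end SkewLines

end CubicSurf

open CubicSurf MvPolynomial in
/-- Let `K` be a field with at least 13 elements and `S` a smooth cubic
surface in `ℙ³` over `K` containing a pair of skew `K`-lines. If `P` is a `K`-point on
either of the two lines which is not an Eckardt point, then `Span({P}) = S(K)`. -/
theorem cubic_surface_skew_lines_span_singleton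
    {K : Type*} [Field K] (hK : 13 ≤ Cardinal.mk K)
    (F : MvPolynomial (Fin 4) K) (hF : SmoothCubic F)
    (W₁ W₂ : Submodule K (Fin 4 → K))
    (hl₁ : IsLine W₁) (hl₂ : IsLine W₂)
    (hS₁ : LineOnSurf F W₁) (hS₂ : LineOnSurf F W₂)
    (hskew : W₁ ⊓ W₂ = ⊥)
    (P : Projectivization K (Fin 4 → K))
    (hP : OnLine W₁ P ∨ OnLine W₂ P)
    (hPS : P ∈ zeroSet F)
    (hPE : ¬ IsEckardt F P) :
    Span F {P} = zeroSet F := by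
  have hK' : 12 ≤ Cardinal.mk K := le_trans (by norm_num) hK
  rcases hP with hP | hP
  · exact span_singleton_eq_zeroSet hK' hF hl₁ hl₂ hS₁ hS₂ hskew hP hPS hPE
  · exact span_singleton_eq_zeroSet hK' hF hl₂ hl₁ hS₂ hS₁ (inf_comm W₁ W₂ ▸ hskew) hP hPS hPE
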